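/- Let $G$ be a finite graph (multiple edges allowed) in which each vertex has valence at most $4$, which has no loops, and which has at least one edge unless it is empty. Let $G$ be smoothly embedded in the 2-sphere $S^2$, in the following sense: the vertices are distinct points; each edge is a smooth arc, parametrised by $[0,1]$ with nowhere vanishing velocity (endpoints included), which joins its two end vertices; the interiors of the edges are embedded, disjoint from each other and disjoint from the vertices; the edges at a vertex leave it in pairwise distinct tangent directions; and at each vertex of valence $4$ the four tangent directions do not all lie in a closed half-plane of the tangent plane, and either form two pairs of opposite directions (as at a crossing of a link projection) or contain no two opposite directions. A Morse function $f\colon S^2\to\mathbb{R}$ (a smooth function with only nondegenerate critical points) is generic with respect to $G$ if its critical points have distinct values and the vertices of $G$ have distinct values (a critical point and a vertex may share a value, and vertices may be critical points). The width of $G$ with respect to $f$ is $\max\{|f^{-1}(t)\cap G| : t\in\mathbb{R}\}$, and the Morse width of $G$ is the minimum of this width over all Morse functions $f$ that are generic with respect to $G$. For a set $A$ of vertices, let $\partial A$ be the set of edges with one endpoint in $A$ and one endpoint not in $A$. For a bijection $\varphi$ from $\{1,\dots,v(G)\}$ to the vertex set $V(G)$, where $v(G)=|V(G)|$, the width of $\varphi$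 is $\max_i|\partial(\varphi(\{1,\dots,i\}))|$, and the width of $G$ as an abstract graph is the minimum of the widths of all such $\varphi$. Then the Morse width of $G$ is equal to its width as an abstract graph. -/

import Mathlib

open scoped ContDiff Manifold

/-! ### Finite graphs and their width -/

/-- A graph with vertex type `V` and edge type `E`: every edge has an unordered pair of
endpoints. Multiple edges and loops are allowed. -/
structure Multigraph (V E : Type*) where
  /-- the two (possibly equal) endpoints of each edge -/
  ends : E → Sym2 V

namespace Multigraph

variable {V E : Type*} (G : Multigraph V E)

/-- `∂A`: the set of edges with one endpoint in `A` and one endpoint not in `A`. -/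
def edgeBoundary (A : Set V) : Set E :=
  {e | ∃ u v : V, G.ends e = s(u, v) ∧ u ∈ A ∧ v ∉ A}

/-- The valence of a vertex: the number of edge-ends at `v`, so that loops count twice. -/
noncomputable def degree (v : V) : ℕ :=
  {e | v ∈ G.ends e}.ncard + {e | G.ends e = s(v, v)}.ncard

/-- No edge joins a vertex to itself. -/
def Loopless : Prop := ∀ e, ¬ (G.ends e).IsDiag

/-- The width of a total ordering `φ` of the vertices: the maximum over `i` of
`|∂(φ({first, …, i-th}))|`. -/
noncomputable def orderingWidth [Fintype V] (φ : Fin (Fintype.card V) ≃ V) : ℕ :=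
  Finset.univ.sup fun i : Fin (Fintype.card V) => (G.edgeBoundary (φ '' Set.Iic i)).ncard

/-- The width of an abstract graph: the minimum of the widths of all total orderings of its
vertices. (The set of these widths is never empty.) -/
noncomputable def width [Fintype V] : ℕ :=
  sInf (Set.range fun φ : Fin (Fintype.card V) ≃ V => G.orderingWidth φ)

end Multigraph

/-! ### Morse functions on the 2-sphere -/

/-- Euclidean 3-space. -/
abbrev E3 : Type := EuclideanSpace ℝ (Fin 3)

/-- The unit sphere in Euclidean 3-space. -/
abbrev S2 : Type := Metric.sphere (0 : E3) 1

instance finrankE3Fact : Fact (Module.finrank ℝ E3 = 2 + 1) := ⟨by simp⟩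

/-- The set of critical points of a function on the 2-sphere. -/
def criticalSet (f : S2 → ℝ) : Set S2 := {p | mfderiv (𝓡 2) 𝓘(ℝ, ℝ) f p = 0}

/-- The second derivative at `p` of the local expression of `f` in the preferred chart at `p`.
At a critical point, this is the Hessian, and whether it is nondegenerate does not depend on
the chart. -/
noncomputable def chartHessian (f : S2 → ℝ) (p : S2) :
    EuclideanSpace ℝ (Fin 2) →L[ℝ] EuclideanSpace ℝ (Fin 2) →L[ℝ] ℝ :=
  fderiv ℝ (fderiv ℝ (f ∘ (extChartAt (𝓡 2) p).symm)) (extChartAt (𝓡 2) p p)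

/-- A Morse function on the 2-sphere: a smooth function all of whose critical points are
nondegenerate. -/
structure IsMorse (f : S2 → ℝ) : Prop where
  smooth : ContMDiff (𝓡 2) 𝓘(ℝ, ℝ) ∞ f
  nondegenerate : ∀ p ∈ criticalSet f, ∀ x, x ≠ 0 → ∃ y, chartHessian f p x y ≠ 0

/-! ### Graphs embedded in the 2-sphere -/

/-- The velocity vector at time `t` of a path on the sphere parametrised by `[0, 1]`
(one-sided at the two ends), as a vector of the ambient space. -/
noncomputable def pathVelocity (γ : ℝ → S2) (t : ℝ) : E3 :=
  derivWithin (fun s => (γ s : E3)) (Set.Icc 0 1) t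

/-- The first point (`false`) or the last point (`true`) of a path parametrised by `[0, 1]`. -/
def pathEnd (γ : ℝ → S2) : Bool → S2
  | false => γ 0
  | true => γ 1

/-- The tangent vector with which a path parametrised by `[0, 1]` leaves its first point
(`false`) or, traversed backwards, leaves its last point (`true`). -/
noncomputable def pathEndDir (γ : ℝ → S2) : Bool → E3
  | false => pathVelocity γ 0
  | true => -pathVelocity γ 1

/-- The tangent vectors at `p` of the edge-ends at `p`, for a family of paths parametrised by
`[0, 1]`. -/
def endDirs {E : Type*} (arc : E → ℝ → S2) (p : S2) : Set E3 :=
  {d | ∃ e b, pathEnd (arc e) b = p ∧ pathEndDir (arc e) b = d}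

/-- A smooth embedding of a graph in the 2-sphere. Vertices go to distinct points, and edges go
to smooth regular arcs, which are embedded, meet the vertices only at their own ends and are
otherwise disjoint from each other. Different edge-ends at a vertex leave it in different
directions. The four directions at a vertex of valence 4 do not lie in a closed half-plane of
the tangent plane, and either they form two pairs of opposite directions, as at a crossing of a
link projection, or no two of them are opposite. Only the values of `arc e` on `[0, 1]`
matter. -/
structure SmoothEmbedding {V E : Type*} (G : Multigraph V E) where
  /-- the position of each vertex -/
  vert : V → S2
  /-- a parametrisation of each edge by `[0, 1]` -/
  arc : E → ℝ → S2
  vert_injective : Function.Injective vert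
  arc_ends : ∀ e, ∃ u v, G.ends e = s(u, v) ∧ arc e 0 = vert u ∧ arc e 1 = vert v
  arc_smooth : ∀ e, ContDiffOn ℝ ∞ (fun t => (arc e t : E3)) (Set.Icc 0 1)
  arc_regular : ∀ e, ∀ t ∈ Set.Icc (0 : ℝ) 1, pathVelocity (arc e) t ≠ 0
  arc_injOn : ∀ e, Set.InjOn (arc e) (Set.Ioo 0 1)
  arc_ne_vert : ∀ e, ∀ t ∈ Set.Ioo (0 : ℝ) 1, ∀ v, arc e t ≠ vert v
  arc_ne_arc : ∀ e e', e ≠ e' →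
    ∀ t ∈ Set.Ioo (0 : ℝ) 1, ∀ t' ∈ Set.Ioo (0 : ℝ) 1, arc e t ≠ arc e' t'
  dir_distinct : ∀ e b e' b', (e, b) ≠ (e', b') →
    pathEnd (arc e) b = pathEnd (arc e') b' →
    ¬ SameRay ℝ (pathEndDir (arc e) b) (pathEndDir (arc e') b')
  dir_balanced : ∀ v, G.degree v = 4 → ∀ w : E3, inner ℝ (vert v : E3) w = 0 → w ≠ 0 →
    ∃ d ∈ endDirs arc (vert v), inner ℝ w d < 0
  dir_opposite : ∀ v, G.degree v = 4 →
    (∃ d ∈ endDirs arc (vert v), ∃ d' ∈ endDirs arc (vert v), SameRay ℝ d' (-d)) →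
    ∀ d ∈ endDirs arc (vert v), ∃ d' ∈ endDirs arc (vert v), SameRay ℝ d' (-d)

namespace SmoothEmbedding

variable {V E : Type*} {G : Multigraph V E} (Γ : SmoothEmbedding G)

/-- The embedded graph as a subset of the 2-sphere. -/
def carrier : Set S2 := Set.range Γ.vert ∪ ⋃ e, Γ.arc e '' Set.Icc 0 1

/-- A Morse function is generic with respect to the embedded graph if its critical points have
distinct values and the vertices have distinct values. A critical point and a vertex may have
the same value, and may coincide. -/
structure IsGeneric (f : S2 → ℝ) : Prop where
  morse : IsMorse f
  critical_injOn : Set.InjOn f (criticalSet f)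
  vert_injective : Function.Injective fun v => f (Γ.vert v)

/-- The width of the embedded graph with respect to `f`: the maximum over `t` of the number of
points of the graph in `f⁻¹(t)`, with value `⊤` if these numbers are infinite or unbounded. -/
noncomputable def widthWith (f : S2 → ℝ) : ℕ∞ :=
  ⨆ t : ℝ, (f ⁻¹' {t} ∩ Γ.carrier).encard

/-- The Morse width of the embedded graph: the minimum of its width with respect to `f` over
all generic Morse functions `f`. -/
noncomputable def morseWidth : ℕ∞ :=
  ⨅ (f : S2 → ℝ) (_ : Γ.IsGeneric f), Γ.widthWith f

end SmoothEmbedding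

open Set Filter Topology

/-! ### Restrictions of ambient functions to the sphere -/

/-- The Euclidean plane, on which the charts of the sphere are modelled. -/
abbrev E2 : Type := EuclideanSpace ℝ (Fin 2)

/-- The inverse of the preferred chart at `p`, as a map into the ambient space. -/
noncomputable def sphereParam (p : S2) (z : E2) : E3 := ((extChartAt (𝓡 2) p).symm z : S2)

theorem contDiff_sphereParam (p : S2) : ContDiff ℝ ∞ (sphereParam p) := by
  let U : _ ≃ₗᵢ[ℝ] _ :=
    (OrthonormalBasis.fromOrthogonalSpanSingleton (𝕜 := ℝ) 2
      (ne_zero_of_mem_unit_sphere (-p))).repr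
  exact (contDiff_stereoInvFunAux.comp (ℝ ∙ (-p : E3))ᗮ.subtypeL.contDiff).comp U.symm.contDiff

theorem inner_sphereParam_self (p : S2) (z : E2) :
    inner ℝ (sphereParam p z) (sphereParam p z) = 1 := by
  rw [real_inner_self_eq_norm_sq]
  simp [sphereParam]

/-- The differential at the centre of the inverse of the preferred chart at `p`. -/
noncomputable def sphereParamDeriv (p : S2) : E2 →L[ℝ] E3 :=
  fderiv ℝ (sphereParam p) (extChartAt (𝓡 2) p p)

theorem sphereParam_center (p : S2) : sphereParam p (extChartAt (𝓡 2) p p) = p := by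
  simp [sphereParam]

theorem mvfderiv_coe_eq_sphereParamDeriv (p : S2) :
    mvfderiv (𝓡 2) ((↑) : S2 → E3) p = sphereParamDeriv p := by
  rw [((contMDiff_coe_sphere p).mdifferentiableAt one_ne_zero).mvfderiv]
  simp only [mfld_simps, fderivWithin_univ]
  rfl

theorem range_sphereParamDeriv (p : S2) (v : E3) (hv : inner ℝ (p : E3) v = 0) :
    ∃ u, sphereParamDeriv p u = v := by
  have h := range_mvfderiv_subtypeVal (n := 2) p
  have : v ∈ (ℝ ∙ (p : E3))ᗮ := Submodule.mem_orthogonal_singleton_iff_inner_right.2 hv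
  rw [← h, mvfderiv_coe_eq_sphereParamDeriv] at this
  exact this

theorem sphereParamDeriv_tangent (p : S2) (u : E2) :
    inner ℝ (p : E3) (sphereParamDeriv p u) = 0 := by
  have h := range_mvfderiv_subtypeVal (n := 2) p
  rw [← Submodule.mem_orthogonal_singleton_iff_inner_right, ← h, mvfderiv_coe_eq_sphereParamDeriv]
  exact ⟨u, rfl⟩

theorem sphereParamDeriv_injective (p : S2) : Function.Injective (sphereParamDeriv p) := by
  have h := injective_mvfderiv_subtypeVal_sphere (n := 2) p
  rw [mvfderiv_coe_eq_sphereParamDeriv] at h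
  exact h

/-- `x` is a critical point of the restriction of `F` to the sphere. -/
def IsSphereCritical (F : E3 → ℝ) (x : E3) : Prop :=
  ∀ v, inner ℝ x v = 0 → fderiv ℝ F x v = 0

/-- The Hessian at a critical point `x` of the restriction of `F` to the sphere is nondegenerate. -/
def IsSphereNondegenerate (F : E3 → ℝ) (x : E3) : Prop :=
  ∀ u, inner ℝ x u = 0 → u ≠ 0 → ∃ v, inner ℝ x v = 0 ∧
    fderiv ℝ (fderiv ℝ F) x u v - fderiv ℝ F x x * inner ℝ u v ≠ 0

theorem contMDiff_restrict_sphere {F : E3 → ℝ} (hF : ContDiff ℝ ∞ F) :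
    ContMDiff (𝓡 2) 𝓘(ℝ, ℝ) ∞ (fun x : S2 => F x) :=
  hF.contMDiff.comp contMDiff_coe_sphere

theorem mem_criticalSet_restrict_iff {F : E3 → ℝ} (hF : ContDiff ℝ ∞ F) (p : S2) :
    p ∈ criticalSet (fun x : S2 => F x) ↔ IsSphereCritical F p := by
  have hm : MDifferentiableAt (𝓡 2) 𝓘(ℝ, ℝ) (fun x : S2 => F x) p :=
    (contMDiff_restrict_sphere hF p).mdifferentiableAt (by simp)
  have hd : HasFDerivAt (F ∘ sphereParam p) ((fderiv ℝ F p).comp (sphereParamDeriv p))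
      (extChartAt (𝓡 2) p p) := by
    refine HasFDerivAt.comp _ ?_
      ((contDiff_sphereParam p).differentiable (by simp) _).hasFDerivAt
    rw [sphereParam_center]
    exact (hF.differentiable (by simp) _).hasFDerivAt
  have h : mfderiv (𝓡 2) 𝓘(ℝ, ℝ) (fun x : S2 => F x) p
      = (fderiv ℝ F p).comp (sphereParamDeriv p) := by
    rw [hm.mfderiv, ← hd.fderiv]
    simp only [mfld_simps, fderivWithin_univ]
    rfl
  rw [criticalSet, mem_ofPred_eq, h]
  constructor
  · intro h0 v hv
    obtain ⟨u, rfl⟩ := range_sphereParamDeriv p v hv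
    exact congrArg (fun T : E2 →L[ℝ] ℝ => T u) h0
  · intro h0
    ext u
    exact h0 _ (sphereParamDeriv_tangent p u)

theorem fderiv_fderiv_comp {X Y Z : Type*} [NormedAddCommGroup X] [NormedSpace ℝ X]
    [NormedAddCommGroup Y] [NormedSpace ℝ Y] [NormedAddCommGroup Z] [NormedSpace ℝ Z]
    {F : Y → Z} {ψ : X → Y} (hF : Differentiable ℝ F) (hψ : Differentiable ℝ ψ) (z : X)
    (hF2 : DifferentiableAt ℝ (fderiv ℝ F) (ψ z)) (hψ2 : DifferentiableAt ℝ (fderiv ℝ ψ) z)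
    (u v : X) :
    fderiv ℝ (fderiv ℝ (F ∘ ψ)) z u v =
      fderiv ℝ (fderiv ℝ F) (ψ z) (fderiv ℝ ψ z u) (fderiv ℝ ψ z v)
        + fderiv ℝ F (ψ z) (fderiv ℝ (fderiv ℝ ψ) z u v) := by
  have e1 : fderiv ℝ (F ∘ ψ) = fun y => (fderiv ℝ F (ψ y)).comp (fderiv ℝ ψ y) :=
    funext fun y => fderiv_comp y (hF _) (hψ y)
  have e2 := HasFDerivAt.clm_comp (c := fun y => fderiv ℝ F (ψ y))
    (HasFDerivAt.comp z hF2.hasFDerivAt (hψ z).hasFDerivAt) hψ2.hasFDerivAt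
  rw [e1, e2.fderiv]
  simp only [add_apply, ContinuousLinearMap.comp_apply,
    ContinuousLinearMap.compL_apply, ContinuousLinearMap.flip_apply]
  rw [add_comm]

theorem chartHessian_restrict {F : E3 → ℝ} (hF : ContDiff ℝ ∞ F) {p : S2}
    (hp : IsSphereCritical F p) (u v : E2) :
    chartHessian (fun x : S2 => F x) p u v =
      fderiv ℝ (fderiv ℝ F) p (sphereParamDeriv p u) (sphereParamDeriv p v)
        - fderiv ℝ F p p * inner ℝ (sphereParamDeriv p u) (sphereParamDeriv p v) := by
  set z := extChartAt (𝓡 2) p p with hz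
  have hψ := contDiff_sphereParam p
  have hψd : Differentiable ℝ (sphereParam p) := hψ.differentiable (by simp)
  have hψ2 : Differentiable ℝ (fderiv ℝ (sphereParam p)) :=
    (hψ.fderiv_right (m := 1) (by norm_cast)).differentiable (by simp)
  have hFd : Differentiable ℝ F := hF.differentiable (by simp)
  have hF2 : Differentiable ℝ (fderiv ℝ F) :=
    (hF.fderiv_right (m := 1) (by norm_cast)).differentiable (by simp)
  have hc : sphereParam p z = p := sphereParam_center p
  have e3 : chartHessian (fun x : S2 => F x) p u v =
      fderiv ℝ (fderiv ℝ F) p (sphereParamDeriv p u) (sphereParamDeriv p v)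
      + fderiv ℝ F p (fderiv ℝ (fderiv ℝ (sphereParam p)) z u v) := by
    have := fderiv_fderiv_comp hFd hψd z (hF2 _) (hψ2 z) u v
    rw [hc] at this
    exact this
  have e4 : inner ℝ (p : E3) (fderiv ℝ (fderiv ℝ (sphereParam p)) z u v) =
      - inner ℝ (sphereParamDeriv p u) (sphereParamDeriv p v) := by
    have k1 : ∀ y, inner ℝ (sphereParam p y) (fderiv ℝ (sphereParam p) y v) = 0 := by
      intro y
      have := ((hψd y).hasFDerivAt.inner ℝ (hψd y).hasFDerivAt).fderiv
      have h0 : (fun t => inner ℝ (sphereParam p t) (sphereParam p t)) = fun _ => (1 : ℝ) :=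
        funext (inner_sphereParam_self p)
      rw [h0] at this
      have := congrArg (fun T : E2 →L[ℝ] ℝ => T v) this
      simp [real_inner_comm] at this
      linarith
    have k2 := ((hψd z).hasFDerivAt.inner ℝ
      ((hψ2 z).hasFDerivAt.clm_apply (hasFDerivAt_const v z))).fderiv
    have h0 : (fun y => inner ℝ (sphereParam p y) (fderiv ℝ (sphereParam p) y v))
        = fun _ => (0 : ℝ) := funext k1
    rw [h0] at k2
    have := congrArg (fun T : E2 →L[ℝ] ℝ => T u) k2
    simp [hc] at this
    rw [sphereParamDeriv, ← hz]
    linarith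
  have e5 : ∀ w : E3, fderiv ℝ F p w = fderiv ℝ F p p * inner ℝ (p : E3) w := by
    intro w
    have hpp : inner ℝ (p : E3) (p : E3) = 1 := by
      rw [real_inner_self_eq_norm_sq]; simp
    have := hp (w - (inner ℝ (p : E3) w) • (p : E3)) (by
      rw [inner_sub_right, inner_smul_right, hpp]; ring)
    rw [map_sub, map_smul, smul_eq_mul] at this
    linarith
  rw [e3, e5, e4]
  ring

theorem exists_chartHessian_ne_zero {F : E3 → ℝ} (hF : ContDiff ℝ ∞ F) {p : S2}
    (hp : IsSphereCritical F p) (hn : IsSphereNondegenerate F p) (u : E2) (hu : u ≠ 0) :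
    ∃ v, chartHessian (fun x : S2 => F x) p u v ≠ 0 := by
  obtain ⟨w, hw, hne⟩ := hn (sphereParamDeriv p u) (sphereParamDeriv_tangent p u)
    (fun h => hu (sphereParamDeriv_injective p (by rw [h, map_zero])))
  obtain ⟨v, rfl⟩ := range_sphereParamDeriv p w hw
  exact ⟨v, by rwa [chartHessian_restrict hF hp]⟩

theorem isMorse_restrict {F : E3 → ℝ} (hF : ContDiff ℝ ∞ F)
    (h : ∀ p : S2, IsSphereCritical F p → IsSphereNondegenerate F p) :
    IsMorse (fun x : S2 => F x) where
  smooth := contMDiff_restrict_sphere hF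
  nondegenerate p hp := by
    rw [mem_criticalSet_restrict_iff hF] at hp
    exact exists_chartHessian_ne_zero hF hp (h p hp)

/-! ### Isolation and stability of critical points -/

/-- The restriction of a covector at `x` to the tangent plane of the unit sphere, extended by `0`
on the normal line. -/
noncomputable def tangentialPart (α : E3 →L[ℝ] ℝ) (x : E3) : E3 →L[ℝ] ℝ := α - α x • innerSL ℝ x

theorem continuous_tangentialPart :
    Continuous fun z : (E3 →L[ℝ] ℝ) × E3 => tangentialPart z.1 z.2 := by
  unfold tangentialPart
  fun_prop

theorem isSphereCritical_iff_tangentialPart {F : E3 → ℝ} {x : E3} (hx : ‖x‖ = 1) :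
    IsSphereCritical F x ↔ tangentialPart (fderiv ℝ F x) x = 0 := by
  have hxx : inner ℝ x x = 1 := by rw [real_inner_self_eq_norm_sq, hx]; norm_num
  constructor
  · intro h
    ext w
    have := h (w - (inner ℝ x w) • x) (by rw [inner_sub_right, inner_smul_right, hxx]; ring)
    rw [map_sub, map_smul, smul_eq_mul] at this
    simp only [tangentialPart, sub_apply, smul_apply,
      innerSL_apply_apply, smul_eq_mul, zero_apply]
    linarith
  · intro h v hv
    have := congrArg (fun T : E3 →L[ℝ] ℝ => T v) h
    simpa [tangentialPart, hv] using this

theorem eventually_not_isSphereCritical {F : E3 → ℝ} (hF : ContDiff ℝ ∞ F) {x : E3}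
    (hn : IsSphereNondegenerate F x) :
    ∀ᶠ y in 𝓝[≠] x, ‖y‖ = 1 → ¬ IsSphereCritical F y := by
  have hF2 : Differentiable ℝ (fderiv ℝ F) :=
    (hF.fderiv_right (m := 1) (by norm_cast)).differentiable (by simp)
  have h1 := (hF2 x).hasFDerivAt
  have h2 := h1.clm_apply (hasFDerivAt_id x)
  have h3 := (h1.sub (h2.smul (innerSL ℝ (E := E3)).hasFDerivAt)).prodMk
    ((hasFDerivAt_id x).norm_sq)
  have key := h3.eventually_ne (c := ((0 : E3 →L[ℝ] ℝ), (1 : ℝ))) (by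
    refine (LinearMap.exists_antilipschitzWith _ ?_).imp fun K hK => hK.2
    rw [LinearMap.ker_eq_bot']
    intro z hz
    by_contra hz0
    have hz2 := congrArg Prod.snd hz
    have hz1 := congrArg Prod.fst hz
    have hxz : inner ℝ x z = 0 := by
      simpa using hz2
    obtain ⟨v, hv, hne⟩ := hn z hxz hz0
    apply hne
    have := congrArg (fun T : E3 →L[ℝ] ℝ => T v) hz1
    have e1 : innerSL ℝ x v = 0 := hv
    have e2 : innerSL ℝ z v = inner ℝ z v := rfl
    simpa [e1, e2] using this)
  filter_upwards [key] with y hy hy1 hc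
  rw [isSphereCritical_iff_tangentialPart hy1] at hc
  apply hy
  ext1
  · exact hc
  · simp [hy1]

theorem IsCompact.eventually_tangentialPart_ne_zero {A : Type*} [TopologicalSpace A] {K : Set E3}
    (hK : IsCompact K) {α : A → E3 → (E3 →L[ℝ] ℝ)} (hα : Continuous fun z : A × E3 => α z.1 z.2)
    {a₀ : A} (h : ∀ x ∈ K, tangentialPart (α a₀ x) x ≠ 0) :
    ∀ᶠ a in 𝓝 a₀, ∀ x ∈ K, tangentialPart (α a x) x ≠ 0 := by
  refine hK.eventually_forall_of_forall_eventually fun x hx => ?_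
  have hc : Continuous fun z : A × E3 => tangentialPart (α z.1 z.2) z.2 :=
    continuous_tangentialPart.comp (hα.prodMk continuous_snd)
  exact hc.continuousAt.eventually_ne (h x hx)

theorem isClosed_setOf_isSphereCritical {F : E3 → ℝ} (hF : ContDiff ℝ ∞ F) :
    IsClosed {x : E3 | ‖x‖ = 1 ∧ IsSphereCritical F x} := by
  have h : {x : E3 | ‖x‖ = 1 ∧ IsSphereCritical F x} =
      {x : E3 | ‖x‖ = 1} ∩ {x | tangentialPart (fderiv ℝ F x) x = 0} := by
    ext x
    constructor
    · rintro ⟨h1, h2⟩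
      exact ⟨h1, (isSphereCritical_iff_tangentialPart h1).1 h2⟩
    · rintro ⟨h1, h2⟩
      exact ⟨h1, (isSphereCritical_iff_tangentialPart h1).2 h2⟩
  rw [h]
  refine (isClosed_eq continuous_norm continuous_const).inter (isClosed_eq ?_ continuous_const)
  exact continuous_tangentialPart.comp
    ((hF.continuous_fderiv (by simp)).prodMk continuous_id)

theorem finite_setOf_isSphereCritical {F : E3 → ℝ} (hF : ContDiff ℝ ∞ F)
    (hn : ∀ x, ‖x‖ = 1 → IsSphereCritical F x → IsSphereNondegenerate F x) :
    {x : E3 | ‖x‖ = 1 ∧ IsSphereCritical F x}.Finite := by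
  by_contra hinf
  have hcpt : IsCompact {x : E3 | ‖x‖ = 1 ∧ IsSphereCritical F x} :=
    (isCompact_sphere (0 : E3) 1).of_isClosed_subset (isClosed_setOf_isSphereCritical hF)
      fun x hx => by simpa using hx.1
  obtain ⟨x, hx, hacc⟩ := Set.Infinite.exists_accPt_of_subset_isCompact hinf hcpt subset_rfl
  rw [accPt_iff_frequently_nhdsNE] at hacc
  obtain ⟨y, hy, hy'⟩ :=
    (hacc.and_eventually (eventually_not_isSphereCritical hF (hn x hx.1 hx.2))).exists
  exact hy' hy.1 hy.2

theorem Filter.EventuallyEq.isSphereCritical_iff {F F' : E3 → ℝ} {x : E3} (h : F =ᶠ[𝓝 x] F') :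
    IsSphereCritical F x ↔ IsSphereCritical F' x := by
  unfold IsSphereCritical
  rw [h.fderiv_eq]

theorem Filter.EventuallyEq.isSphereNondegenerate_iff {F F' : E3 → ℝ} {x : E3}
    (h : F =ᶠ[𝓝 x] F') : IsSphereNondegenerate F x ↔ IsSphereNondegenerate F' x := by
  unfold IsSphereNondegenerate
  rw [h.fderiv_eq, h.fderiv.fderiv_eq]

theorem isSphereCritical_add_const {F : E3 → ℝ} {x : E3} (c : ℝ) :
    IsSphereCritical (fun y => F y + c) x ↔ IsSphereCritical F x := by
  unfold IsSphereCritical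
  rw [fderiv_add_const]

theorem isSphereNondegenerate_add_const {F : E3 → ℝ} {x : E3} (c : ℝ) :
    IsSphereNondegenerate (fun y => F y + c) x ↔ IsSphereNondegenerate F x := by
  unfold IsSphereNondegenerate
  have : fderiv ℝ (fun y => F y + c) = fderiv ℝ F := funext fun y => fderiv_add_const c
  rw [this]

/-! ### Generic linear perturbations are Morse -/

theorem hasFDerivAt_norm_of_ne_zero {y : E3} (hy : y ≠ 0) :
    HasFDerivAt (fun y : E3 => ‖y‖) (‖y‖⁻¹ • innerSL ℝ y) y := by
  have h := ((hasFDerivAt_id y).norm_sq).sqrt (by simpa using hy)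
  have e : (fun y : E3 => √(‖id y‖ ^ 2)) = fun y => ‖y‖ := by
    funext y; simp
  rw [e] at h
  refine h.congr_fderiv ?_
  have h1 : ‖y‖ ≠ 0 := norm_ne_zero_iff.2 hy
  have h2 : √(‖id y‖ ^ 2) = ‖y‖ := by simp
  rw [h2, two_nsmul, ← two_smul ℝ, smul_smul, ContinuousLinearMap.comp_id, id]
  congr 1
  field_simp

theorem ae_isSphereNondegenerate_add_inner {F : E3 → ℝ} (hF : ContDiff ℝ ∞ F) :
    ∀ᵐ a : E3, ∀ x : E3, ‖x‖ = 1 → IsSphereCritical (fun y => F y + inner ℝ a y) x →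
      IsSphereNondegenerate (fun y => F y + inner ℝ a y) x := by
  have hFd : Differentiable ℝ F := hF.differentiable (by simp)
  have hF2 : Differentiable ℝ (fderiv ℝ F) :=
    (hF.fderiv_right (m := 1) (by norm_cast)).differentiable (by simp)
  let D : (E3 →L[ℝ] ℝ) →L[ℝ] E3 := LinearMap.toContinuousLinearMap
    { toFun := (InnerProductSpace.toDual ℝ E3).symm
      map_add' := map_add _
      map_smul' := by simp }
  have hD : ∀ (α : E3 →L[ℝ] ℝ) (w : E3), inner ℝ (D α) w = α w := fun α w =>
    InnerProductSpace.toDual_symm_apply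
  let Φ : E3 → E3 := fun y => Real.log ‖y‖ • (‖y‖⁻¹ • y) - D (fderiv ℝ F (‖y‖⁻¹ • y))
  let N : E3 → E3 →L[ℝ] E3 := fun y =>
    ‖y‖⁻¹ • ContinuousLinearMap.id ℝ E3 + (-(‖y‖ ^ 2)⁻¹ • (‖y‖⁻¹ • innerSL ℝ y)).smulRight y
  let Φ' : E3 → E3 →L[ℝ] E3 := fun y =>
    Real.log ‖y‖ • N y + (‖y‖⁻¹ • (‖y‖⁻¹ • innerSL ℝ y)).smulRight (‖y‖⁻¹ • y)
      - D.comp ((fderiv ℝ (fderiv ℝ F) (‖y‖⁻¹ • y)).comp (N y))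
  have hΦ : ∀ y, y ≠ 0 → HasFDerivAt Φ (Φ' y) y := by
    intro y hy
    have hn := hasFDerivAt_norm_of_ne_zero hy
    have hy' : ‖y‖ ≠ 0 := norm_ne_zero_iff.2 hy
    have hN : HasFDerivAt (fun y : E3 => ‖y‖⁻¹ • y) (N y) y :=
      ((hasDerivAt_inv hy').comp_hasFDerivAt y hn).smul (hasFDerivAt_id y)
    have h1 := (hn.log hy').smul hN
    have h2 := D.hasFDerivAt.comp y ((hF2 _).hasFDerivAt.comp y hN)
    exact h1.sub h2
  have hnull := MeasureTheory.addHaar_image_eq_zero_of_det_fderivWithin_eq_zero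
    (MeasureTheory.volume : MeasureTheory.Measure E3)
    (s := {y | y ≠ 0 ∧ (Φ' y).det = 0}) (f := Φ) (f' := Φ')
    (fun y hy => (hΦ y hy.1).hasFDerivWithinAt) (fun y hy => hy.2)
  filter_upwards [MeasureTheory.measure_eq_zero_iff_ae_notMem.1 hnull] with a ha x hx hcrit u hu hu0
  by_contra! hdeg
  apply ha
  have hxx : inner ℝ x x = 1 := by rw [real_inner_self_eq_norm_sq, hx]; norm_num
  have hx0 : x ≠ 0 := by rintro rfl; simp at hx
  have e1 : fderiv ℝ (fun y => F y + inner ℝ a y) = fun y => fderiv ℝ F y + innerSL ℝ a := by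
    funext y
    exact ((hFd y).hasFDerivAt.add (innerSL ℝ a).hasFDerivAt).fderiv
  have e2 : ∀ y, fderiv ℝ (fderiv ℝ (fun y => F y + inner ℝ a y)) y
      = fderiv ℝ (fderiv ℝ F) y := by
    intro y
    rw [e1]
    exact fderiv_add_const _
  rw [e2, e1] at hdeg
  set l : ℝ := (fderiv ℝ F x + innerSL ℝ a) x with hl
  have hgrad : D (fderiv ℝ F x) + a = l • x := by
    have h0 := (isSphereCritical_iff_tangentialPart hx).1 hcrit
    rw [e1, tangentialPart, ← hl] at h0
    refine ext_inner_right ℝ fun w => ?_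
    have := congrArg (fun T : E3 →L[ℝ] ℝ => T w) h0
    simp only [sub_apply, add_apply,
      smul_apply, innerSL_apply_apply, smul_eq_mul,
      zero_apply] at this
    rw [inner_add_left, hD, inner_smul_left]
    simp
    linarith
  set H := fderiv ℝ (fderiv ℝ F) x with hH
  -- the tangential part of the Hessian annihilates `u`
  obtain ⟨c, hc⟩ : ∃ c : ℝ, D (H u) - l • u = c • x := by
    refine ⟨H u x, ?_⟩
    refine ext_inner_right ℝ fun w => ?_
    have h1 := hdeg (w - (inner ℝ x w) • x) (by
      rw [inner_sub_right, inner_smul_right, hxx]; ring)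
    simp only [map_sub, map_smul, smul_eq_mul, inner_sub_right, inner_smul_right] at h1
    have hu' : inner ℝ u x = 0 := by rw [real_inner_comm, hu]
    rw [inner_sub_left, hD, real_inner_smul_left, real_inner_smul_left]
    rw [hu'] at h1
    linarith
  have hr : ‖Real.exp l • x‖ = Real.exp l := by
    rw [norm_smul, hx, mul_one, Real.norm_eq_abs, abs_of_pos (Real.exp_pos l)]
  have hre : (Real.exp l)⁻¹ • Real.exp l • x = x := inv_smul_smul₀ (Real.exp_pos l).ne' x
  refine ⟨Real.exp l • x, ⟨smul_ne_zero (Real.exp_pos l).ne' hx0, ?_⟩, ?_⟩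
  · have hker : Φ' (Real.exp l • x) (Real.exp l • u + (Real.exp l * c) • x) = 0 := by
      have hN1 : N (Real.exp l • x) (Real.exp l • u + (Real.exp l * c) • x) = u := by
        simp only [N, hr]
        simp [inner_smul_right, hu, inner_add_right, smul_smul, hx]
        have := (Real.exp_pos l).ne'
        have e4 : (Real.exp l ^ 2)⁻¹ * (Real.exp l * c) * Real.exp l = c := by field_simp
        rw [e4]
        abel
      simp only [Φ', sub_apply, add_apply,
        smul_apply, ContinuousLinearMap.comp_apply, hN1, hr, hre,
        Real.log_exp, ← hH, ContinuousLinearMap.smulRight_apply]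
      have : D (H u) = l • u + c • x := by rw [← hc]; abel
      rw [this]
      have e5 := (Real.exp_pos l).ne'
      simp [inner_smul_right, hu, inner_add_right, hx]
    by_contra hdet
    have hinj := (LinearMap.equivOfDetNeZero _ hdet).injective
    have h0 : Real.exp l • u + (Real.exp l * c) • x = 0 :=
      hinj (by rw [map_zero]; exact hker)
    have := congrArg (fun w => inner ℝ u w) h0
    rw [real_inner_comm] at hu
    simp [inner_add_right, inner_smul_right, hu] at this
    exact hu0 this
  · simp only [Φ, hr, hre, Real.log_exp, ← hgrad]
    abel

/-! ### Quadratic functions with prescribed signs on at most four directions -/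

/-- The determinant of two vectors of the plane. -/
def planeDet (u v : ℝ × ℝ) : ℝ := u.1 * v.2 - u.2 * v.1

/-- The scalar product of two vectors of the plane. -/
def planeDot (u v : ℝ × ℝ) : ℝ := u.1 * v.1 + u.2 * v.2

/-- Two vectors of the plane have opposite directions. -/
def PlaneOpposite (u v : ℝ × ℝ) : Prop := planeDet u v = 0 ∧ planeDot u v < 0

/-- A quadratic form on the plane, with coefficients `c`. -/
def planeForm (c : ℝ × ℝ × ℝ) (u : ℝ × ℝ) : ℝ :=
  c.1 * u.1 ^ 2 + 2 * c.2.1 * u.1 * u.2 + c.2.2 * u.2 ^ 2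

/-- Along every curve with velocity `d i` and acceleration `k i` at `0`, the function with linear
part `w` and quadratic part `c` increases or decreases on one side of `0`, according to the
sign `s i`, and it has at most a nondegenerate critical point at `0`. -/
def IsPlaneModel {ι : Type*} (d k : ι → ℝ × ℝ) (s : ι → ℝ) (w : ℝ × ℝ) (c : ℝ × ℝ × ℝ) : Prop :=
  (∀ i, 0 < s i * planeDot w (d i) ∨ planeDot w (d i) = 0 ∧
    0 < s i * (planeDot w (k i) + 2 * planeForm c (d i))) ∧
  (w ≠ 0 ∨ c.1 * c.2.2 - c.2.1 ^ 2 ≠ 0)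

theorem planeDet_swap (u v : ℝ × ℝ) : planeDet v u = - planeDet u v := by
  unfold planeDet; ring

theorem planeDot_comm (u v : ℝ × ℝ) : planeDot v u = planeDot u v := by
  unfold planeDot; ring

theorem PlaneOpposite.symm {u v : ℝ × ℝ} (h : PlaneOpposite u v) : PlaneOpposite v u :=
  ⟨by rw [planeDet_swap, h.1, neg_zero], by rw [planeDot_comm]; exact h.2⟩

theorem PlaneOpposite.planeDet_mul {u v : ℝ × ℝ} (h : PlaneOpposite u v) (w : ℝ × ℝ) :
    planeDet w v * planeDot u u = planeDet w u * planeDot u v := by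
  have := h.1
  unfold planeDet planeDot at *
  linear_combination (w.1 * u.1 + w.2 * u.2) * this

theorem PlaneOpposite.planeDot_mul {u v : ℝ × ℝ} (h : PlaneOpposite u v) (w : ℝ × ℝ) :
    planeDot w v * planeDot u u = planeDot w u * planeDot u v := by
  have := h.1
  unfold planeDet planeDot at *
  linear_combination (w.2 * u.1 - w.1 * u.2) * this

theorem planeDot_self_pos_of_ne_zero {u : ℝ × ℝ} (h : u ≠ 0) : 0 < planeDot u u := by
  unfold planeDot
  by_contra! h0
  apply h
  ext1 <;> simp <;> nlinarith [sq_nonneg u.1, sq_nonneg u.2]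

theorem PlaneOpposite.self_pos {u v : ℝ × ℝ} (h : PlaneOpposite u v) : 0 < planeDot u u := by
  apply planeDot_self_pos_of_ne_zero
  rintro rfl
  simpa [planeDot] using h.2

/-- The linear functional `planeDot w` changes sign between opposite directions. -/
theorem PlaneOpposite.planeDot_pos_iff {u v : ℝ × ℝ} (h : PlaneOpposite u v) (w : ℝ × ℝ) :
    0 < planeDot w v ↔ planeDot w u < 0 := by
  have h1 := h.planeDot_mul w
  have h2 := h.self_pos
  have h3 := h.2
  constructor <;> intro h4
  · by_contra! h5
    nlinarith [mul_nonneg h5 (neg_pos.2 h3).le, mul_pos h4 h2]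
  · by_contra! h5
    nlinarith [mul_nonneg (neg_nonneg.2 h5) h2.le, mul_pos_of_neg_of_neg h4 h3]

theorem PlaneOpposite.planeDet_eq_zero_iff {u v : ℝ × ℝ} (h : PlaneOpposite u v) (w : ℝ × ℝ) :
    planeDet w v = 0 ↔ planeDet w u = 0 := by
  have h1 := h.planeDet_mul w
  have h2 := h.self_pos.ne'
  have h3 := h.2.ne
  constructor <;> intro h4
  · rw [h4, zero_mul] at h1
    simpa [h3] using h1.symm
  · rw [h4, zero_mul] at h1
    simpa [h2] using h1

theorem eventually_pos_mul_add {a : ℝ} (ha : 0 < a) (b : ℝ) : ∀ᶠ C : ℝ in atTop, 0 < a * C + b :=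
  (tendsto_atTop_add_const_right _ b (tendsto_id.const_mul_atTop ha)).eventually_gt_atTop 0

section PlaneModel

variable {ι : Type*} {d : ι → ℝ × ℝ} {s : ι → ℝ}

/-- No two of the vectors have the same direction. -/
def PlaneDistinct (d : ι → ℝ × ℝ) : Prop :=
  ∀ i j, i ≠ j → planeDet (d i) (d j) ≠ 0 ∨ planeDot (d i) (d j) < 0

/-- The vectors do not lie in a closed half-plane. -/
def PlaneBalanced (d : ι → ℝ × ℝ) : Prop :=
  ∀ w : ℝ × ℝ, w ≠ 0 → ∃ i, planeDot w (d i) < 0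

/-- If two of the vectors are opposite, then each of them is opposite to some other. -/
def PlanePaired (d : ι → ℝ × ℝ) : Prop :=
  (∃ i j, PlaneOpposite (d i) (d j)) → ∀ i, ∃ j, PlaneOpposite (d i) (d j)

theorem PlaneDistinct.not_opposite_opposite (hd : PlaneDistinct d) {i j l : ι} (hil : i ≠ l)
    (h1 : PlaneOpposite (d i) (d j)) (h2 : PlaneOpposite (d j) (d l)) : False := by
  rcases hd i l hil with h | h
  · exact h ((h2.planeDet_eq_zero_iff _).2 h1.1)
  · have h3 := (h2.planeDot_pos_iff (d i)).2 h1.2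
    linarith

theorem PlaneDistinct.det_ne_zero_of_opposite (hd : PlaneDistinct d) {i j l : ι} (hil : i ≠ l)
    (hij : i ≠ j) (h : PlaneOpposite (d j) (d l)) : planeDet (d i) (d j) ≠ 0 := by
  intro h0
  rcases hd i j hij with h1 | h1
  · exact h1 h0
  · exact hd.not_opposite_opposite hil ⟨h0, h1⟩ h

theorem IsPlaneModel.neg {k : ι → ℝ × ℝ} {w : ℝ × ℝ} {c : ℝ × ℝ × ℝ}
    (h : IsPlaneModel d k (fun i => - s i) w c) : IsPlaneModel d k s (-w) (-c) := by
  refine ⟨fun i => ?_, ?_⟩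
  · rcases h.1 i with h1 | ⟨h1, h2⟩
    · left
      simp only [planeDot, Prod.fst_neg, Prod.snd_neg] at h1 ⊢
      linarith
    · right
      simp only [planeDot, planeForm, Prod.fst_neg, Prod.snd_neg] at h1 h2 ⊢
      constructor <;> linarith
  · rcases h.2 with h1 | h1
    · left; simpa using h1
    · right; simpa using h1

theorem exists_isPlaneModel_of_all_pos (hd0 : ∀ i, d i ≠ 0) (hs : ∀ i, s i = 1) (k : ι → ℝ × ℝ) :
    ∃ w c, IsPlaneModel d k s w c := by
  refine ⟨0, (1, 0, 1), fun i => Or.inr ⟨by simp [planeDot], ?_⟩, Or.inr (by norm_num)⟩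
  have := planeDot_self_pos_of_ne_zero (hd0 i)
  simp only [planeDot, planeForm, hs] at *
  norm_num
  nlinarith

theorem exists_isPlaneModel_of_one_neg [Fintype ι] (hd0 : ∀ i, d i ≠ 0) (hd : PlaneDistinct d)
    (hcard : Fintype.card ι ≤ 4) (hpair : Fintype.card ι = 4 → PlanePaired d) {m : ι}
    (hm : s m = -1) (hs : ∀ i, i ≠ m → s i = 1) (k : ι → ℝ × ℝ) :
    ∃ w c, IsPlaneModel d k s w c := by
  classical
  by_cases hopp : ∃ o, PlaneOpposite (d m) (d o)
  · obtain ⟨o, ho⟩ := hopp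
    have hom : o ≠ m := by
      rintro rfl
      exact lt_asymm ho.2 ho.self_pos
    have hdet : ∀ i, i ≠ m → i ≠ o → planeDet (d m) (d i) ≠ 0 := by
      intro i him hio
      rw [planeDet_swap, neg_ne_zero]
      exact hd.det_ne_zero_of_opposite hio him ho
    rcases hcard.lt_or_eq with hlt | heq
    · obtain ⟨t, ht⟩ : ∃ t : ℝ, ∀ i, i ≠ m → i ≠ o → 0 < t * planeDet (d m) (d i) := by
        by_cases hi : ∃ i, i ≠ m ∧ i ≠ o
        · obtain ⟨i, him, hio⟩ := hi
          refine ⟨planeDet (d m) (d i), fun j hjm hjo => ?_⟩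
          have hij : j = i := by
            by_contra hne
            have h4 : ({m, o, i, j} : Finset ι).card = 4 := by
              rw [Finset.card_insert_of_notMem, Finset.card_insert_of_notMem,
                Finset.card_insert_of_notMem, Finset.card_singleton] <;>
              simp [Ne.symm, *]
            have := Finset.card_le_univ ({m, o, i, j} : Finset ι)
            omega
          rw [hij]
          exact mul_self_pos.2 (hdet i him hio)
        · push Not at hi
          exact ⟨0, fun i him hio => absurd (hi i him) hio⟩
      have hev : ∀ᶠ C : ℝ in atTop, ∀ i, i ≠ m → i ≠ o →
          0 < t * planeDet (d m) (d i) * C + - planeDot (d m) (d i) := by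
        refine Filter.eventually_all.2 fun i => ?_
        by_cases h : i ≠ m ∧ i ≠ o
        · filter_upwards [eventually_pos_mul_add (ht i h.1 h.2) (- planeDot (d m) (d i))]
            with C hC _ _ using hC
        · exact Eventually.of_forall fun C h1 h2 => absurd ⟨h1, h2⟩ h
      obtain ⟨C, hC⟩ := hev.exists
      let w : ℝ × ℝ := (-(d m).1 - C * t * (d m).2, -(d m).2 + C * t * (d m).1)
      have hw : ∀ u, planeDot w u = t * planeDet (d m) u * C + - planeDot (d m) u := by
        intro u
        simp only [w, planeDot, planeDet]
        ring
      have hwm : planeDot w (d m) < 0 := by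
        have h0 : planeDet (d m) (d m) = 0 := by unfold planeDet; ring
        rw [hw, h0]
        linarith [planeDot_self_pos_of_ne_zero (hd0 m)]
      refine ⟨w, 0, fun i => Or.inl ?_, Or.inl ?_⟩
      · by_cases him : i = m
        · rw [him, hm]; linarith
        by_cases hio : i = o
        · rw [hio, hs o hom, one_mul]
          exact (ho.planeDot_pos_iff w).2 hwm
        · rw [hs i him, one_mul, hw]
          exact hC i him hio
      · rintro h0
        rw [h0] at hwm
        simp [planeDot] at hwm
    · have hall := hpair heq ⟨m, o, ho⟩
      obtain ⟨i, him, hio⟩ : ∃ i, i ≠ m ∧ i ≠ o := by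
        by_contra! h
        have : Finset.univ ⊆ ({m, o} : Finset ι) := fun j _ => by
          by_cases hj : j = m
          · simp [hj]
          · simp [h j hj]
        have := (Finset.card_le_card this).trans Finset.card_le_two
        rw [Finset.card_univ] at this
        omega
      obtain ⟨j, hij⟩ := hall i
      have hjm : j ≠ m := by
        rintro rfl
        exact hd.not_opposite_opposite hio hij ho
      have hjo : j ≠ o := by
        rintro rfl
        exact hd.not_opposite_opposite him hij ho.symm
      have hji : j ≠ i := by
        rintro rfl
        exact lt_asymm hij.2 hij.self_pos
      have hrest : ∀ l, l ≠ m → l ≠ o → planeDet (d i) (d l) = 0 := by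
        intro l hlm hlo
        by_cases hli : l = i
        · rw [hli]; unfold planeDet; ring
        have hlj : l = j := by
          by_contra hne
          have h5 : ({m, o, i, j, l} : Finset ι).card = 5 := by
            rw [Finset.card_insert_of_notMem, Finset.card_insert_of_notMem,
              Finset.card_insert_of_notMem, Finset.card_insert_of_notMem,
              Finset.card_singleton] <;>
            simp [Ne.symm, *]
          have := Finset.card_le_univ ({m, o, i, j, l} : Finset ι)
          omega
        rw [hlj]
        exact hij.1
      have hδ : planeDet (d i) (d m) ≠ 0 := by
        rw [planeDet_swap, neg_ne_zero]
        exact hdet i him hio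
      let w : ℝ × ℝ := (planeDet (d i) (d m) * (d i).2, - planeDet (d i) (d m) * (d i).1)
      have hw : ∀ u, planeDot w u = - planeDet (d i) (d m) * planeDet (d i) u := by
        intro u
        simp only [w, planeDot, planeDet]
        ring
      have hwm : planeDot w (d m) < 0 := by
        rw [hw]
        nlinarith [mul_self_pos.2 hδ]
      have hev : ∀ᶠ C : ℝ in atTop, ∀ l,
          0 < 2 * planeDot (d l) (d l) * C + planeDot w (k l) :=
        Filter.eventually_all.2 fun l => eventually_pos_mul_add
          (mul_pos two_pos (planeDot_self_pos_of_ne_zero (hd0 l))) _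
      obtain ⟨C, hC⟩ := hev.exists
      refine ⟨w, (C, 0, C), fun l => ?_, Or.inl ?_⟩
      · by_cases hlm : l = m
        · left; rw [hlm, hm]; linarith
        by_cases hlo : l = o
        · left
          rw [hlo, hs o hom, one_mul]
          exact (ho.planeDot_pos_iff w).2 hwm
        · right
          rw [hw, hrest l hlm hlo, hs l hlm, mul_zero]
          refine ⟨rfl, ?_⟩
          have := hC l
          simp only [planeForm, planeDot] at this ⊢
          linarith
      · rintro h0
        rw [h0] at hwm
        simp [planeDot] at hwm
  · push Not at hopp
    have hdet : ∀ i, i ≠ m → planeDet (d m) (d i) ≠ 0 := by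
      intro i hi h0
      rcases hd m i (Ne.symm hi) with h | h
      · exact h h0
      · exact hopp i ⟨h0, h⟩
    have hev : ∀ᶠ C : ℝ in atTop, ∀ i, i ≠ m →
        0 < planeDet (d m) (d i) ^ 2 * C + - planeDot (d m) (d i) ^ 2 := by
      refine Filter.eventually_all.2 fun i => ?_
      by_cases h : i ≠ m
      · filter_upwards [eventually_pos_mul_add (sq_pos_of_ne_zero (hdet i h))
          (- planeDot (d m) (d i) ^ 2)] with C hC _ using hC
      · exact Eventually.of_forall fun C h1 => absurd h1 h
    obtain ⟨C, hC, hC0⟩ := (hev.and (eventually_gt_atTop 0)).exists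
    let c : ℝ × ℝ × ℝ := (C * (d m).2 ^ 2 - (d m).1 ^ 2, - (C + 1) * (d m).1 * (d m).2,
      C * (d m).1 ^ 2 - (d m).2 ^ 2)
    have hc : ∀ u, planeForm c u = planeDet (d m) u ^ 2 * C + - planeDot (d m) u ^ 2 := by
      intro u
      simp only [c, planeForm, planeDot, planeDet]
      ring
    have hpos := planeDot_self_pos_of_ne_zero (hd0 m)
    refine ⟨0, c, fun i => Or.inr ⟨by simp [planeDot], ?_⟩, Or.inr ?_⟩
    · have hz : planeDot 0 (k i) = 0 := by simp [planeDot]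
      rw [hz, hc]
      by_cases him : i = m
      · have h0 : planeDet (d m) (d m) = 0 := by unfold planeDet; ring
        rw [him, hm, h0]
        nlinarith [mul_pos hpos hpos]
      · rw [hs i him]
        linarith [hC i him]
    · have : c.1 * c.2.2 - c.2.1 ^ 2 = - C * planeDot (d m) (d m) ^ 2 := by
        simp only [c, planeDot]
        ring
      rw [this]
      exact mul_ne_zero (neg_ne_zero.2 hC0.ne') (pow_ne_zero 2 hpos.ne')

/-- Two opposite positive directions and two opposite negative directions. -/
theorem exists_isPlaneModel_of_opposite_pairs (hd : PlaneDistinct d) {a b m n : ι}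
    (huniv : ∀ i, i = a ∨ i = b ∨ i = m ∨ i = n) (ham : a ≠ m) (han : a ≠ n) (hbm : b ≠ m)
    (hbn : b ≠ n) (ha : s a = 1) (hb : s b = 1) (hm : s m = -1) (hn : s n = -1)
    (hab : PlaneOpposite (d a) (d b)) (hmn : PlaneOpposite (d m) (d n)) (k : ι → ℝ × ℝ) :
    ∃ w c, IsPlaneModel d k s w c := by
  have h1 : planeDet (d m) (d a) ≠ 0 := hd.det_ne_zero_of_opposite hbm.symm ham.symm hab
  have h2 : planeDet (d m) (d b) ≠ 0 := hd.det_ne_zero_of_opposite ham.symm hbm.symm hab.symm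
  have h3 : planeDet (d a) (d n) ≠ 0 := hd.det_ne_zero_of_opposite ham han hmn.symm
  let c : ℝ × ℝ × ℝ := ((d m).2 ^ 2 - (d a).2 ^ 2, - (d m).1 * (d m).2 + (d a).1 * (d a).2,
    (d m).1 ^ 2 - (d a).1 ^ 2)
  have hc : ∀ u, planeForm c u = planeDet (d m) u ^ 2 - planeDet (d a) u ^ 2 := by
    intro u
    simp only [c, planeForm, planeDet]
    ring
  have haa : ∀ u, planeDet u u = 0 := fun u => by unfold planeDet; ring
  refine ⟨0, c, fun i => Or.inr ⟨by simp [planeDot], ?_⟩, Or.inr ?_⟩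
  · have hz : planeDot 0 (k i) = 0 := by simp [planeDot]
    rw [hz, hc]
    rcases huniv i with rfl | rfl | rfl | rfl
    · rw [ha, haa]; nlinarith [sq_pos_of_ne_zero h1]
    · rw [hb, hab.1]; nlinarith [sq_pos_of_ne_zero h2]
    · rw [hm, haa, planeDet_swap (d i) (d a)]; nlinarith [sq_pos_of_ne_zero h1]
    · rw [hn, hmn.1]; nlinarith [sq_pos_of_ne_zero h3]
  · have : c.1 * c.2.2 - c.2.1 ^ 2 = - planeDet (d m) (d a) ^ 2 := by
      simp only [c, planeDet]
      ring
    rw [this]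
    exact neg_ne_zero.2 (pow_ne_zero 2 h1)

/-- Two positive directions, and the two negative directions opposite to them. -/
theorem exists_isPlaneModel_of_opposite_signs {a b m n : ι}
    (huniv : ∀ i, i = a ∨ i = b ∨ i = m ∨ i = n) (ha : s a = 1) (hb : s b = 1) (hm : s m = -1)
    (hn : s n = -1) (hab : planeDet (d a) (d b) ≠ 0) (ham : PlaneOpposite (d a) (d m))
    (hbn : PlaneOpposite (d b) (d n)) (k : ι → ℝ × ℝ) :
    ∃ w c, IsPlaneModel d k s w c := by
  let w : ℝ × ℝ := (planeDet (d a) (d b) * ((d b).2 - (d a).2),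
    planeDet (d a) (d b) * ((d a).1 - (d b).1))
  have hw : ∀ u, planeDot w u =
      planeDet (d a) (d b) * (planeDet u (d b) + planeDet (d a) u) := by
    intro u
    simp only [w, planeDot, planeDet]
    ring
  have haa : ∀ u, planeDet u u = 0 := fun u => by unfold planeDet; ring
  have hwa : 0 < planeDot w (d a) := by
    rw [hw, haa]; nlinarith [mul_self_pos.2 hab]
  have hwb : 0 < planeDot w (d b) := by
    rw [hw, haa]; nlinarith [mul_self_pos.2 hab]
  refine ⟨w, 0, fun i => Or.inl ?_, Or.inl ?_⟩
  · rcases huniv i with rfl | rfl | rfl | rfl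
    · rw [ha]; linarith
    · rw [hb]; linarith
    · rw [hm]; linarith [(ham.symm.planeDot_pos_iff w).1 hwa]
    · rw [hn]; linarith [(hbn.symm.planeDot_pos_iff w).1 hwb]
  · rintro h0
    rw [h0] at hwa
    simp [planeDot] at hwa

theorem exists_isPlaneModel_of_two_two (hd : PlaneDistinct d) (hbal : PlaneBalanced d)
    (hpair : PlanePaired d) {a b m n : ι}
    (huniv : ∀ i, i = a ∨ i = b ∨ i = m ∨ i = n) (hab : a ≠ b) (ham : a ≠ m) (han : a ≠ n)
    (hbm : b ≠ m) (hbn : b ≠ n) (ha : s a = 1) (hb : s b = 1) (hm : s m = -1) (hn : s n = -1)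
    (k : ι → ℝ × ℝ) : ∃ w c, IsPlaneModel d k s w c := by
  have hself : ∀ i, ¬ PlaneOpposite (d i) (d i) := fun i h => lt_asymm h.2 h.self_pos
  by_cases hδ : planeDet (d a) (d b) = 0
  · have hoab : PlaneOpposite (d a) (d b) :=
      ⟨hδ, (hd a b hab).resolve_left (not_not.2 hδ)⟩
    obtain ⟨j, hj⟩ := hpair ⟨a, b, hoab⟩ m
    have hj' : PlaneOpposite (d m) (d n) := by
      rcases huniv j with rfl | rfl | rfl | rfl
      · exact (hd.not_opposite_opposite hbm.symm hj hoab).elim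
      · exact (hd.not_opposite_opposite ham.symm hj hoab.symm).elim
      · exact (hself _ hj).elim
      · exact hj
    exact exists_isPlaneModel_of_opposite_pairs hd huniv ham han hbm hbn ha hb hm hn hoab hj' k
  have hδ_swap : planeDet (d b) (d a) ≠ 0 := by rw [planeDet_swap]; exact neg_ne_zero.2 hδ
  -- a negative direction opposite to a positive one
  have step : ∀ p q x y, (∀ i, i = p ∨ i = q ∨ i = x ∨ i = y) → p ≠ x → q ≠ x →
      s p = 1 → s q = 1 → s x = -1 → s y = -1 → planeDet (d p) (d q) ≠ 0 →
      planeDet (d p) (d x) = 0 → ∃ w c, IsPlaneModel d k s w c := by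
    intro p q x y hu hpx hqx hp hq hx hy hpq hdx
    have hopx : PlaneOpposite (d p) (d x) := ⟨hdx, (hd p x hpx).resolve_left (not_not.2 hdx)⟩
    obtain ⟨j, hj⟩ := hpair ⟨p, x, hopx⟩ q
    have hqy : PlaneOpposite (d q) (d y) := by
      rcases hu j with rfl | rfl | rfl | rfl
      · exact (hpq hj.symm.1).elim
      · exact (hself _ hj).elim
      · refine (hpq ?_).elim
        exact (hj.symm.planeDet_eq_zero_iff (d p)).2 hdx
      · exact hj
    exact exists_isPlaneModel_of_opposite_signs hu hp hq hx hy hpq hopx hqy k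
  by_cases h1 : planeDet (d a) (d m) = 0
  · exact step a b m n huniv ham hbm ha hb hm hn hδ h1
  by_cases h2 : planeDet (d a) (d n) = 0
  · exact step a b n m (fun i => by have := huniv i; tauto) han hbn ha hb hn hm hδ h2
  by_cases h3 : planeDet (d b) (d m) = 0
  · exact step b a m n (fun i => by have := huniv i; tauto) hbm ham hb ha hm hn hδ_swap h3
  by_cases h4 : planeDet (d b) (d n) = 0
  · exact step b a n m (fun i => by have := huniv i; tauto) hbn han hb ha hn hm hδ_swap h4
  set δ := planeDet (d a) (d b) with hδdef
  let α : ℝ × ℝ := (δ * (d b).2, - δ * (d b).1)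
  let β : ℝ × ℝ := (- δ * (d a).2, δ * (d a).1)
  have hα : ∀ u, planeDot α u = δ * planeDet u (d b) := by
    intro u; simp only [α, planeDot, planeDet]; ring
  have hβ : ∀ u, planeDot β u = δ * planeDet (d a) u := by
    intro u; simp only [β, planeDot, planeDet]; ring
  have haa : ∀ u, planeDet u u = 0 := fun u => by unfold planeDet; ring
  have hδ2 : 0 < δ ^ 2 := sq_pos_of_ne_zero hδ
  have αa : planeDot α (d a) = δ ^ 2 := by rw [hα, ← hδdef]; ring
  have αb : planeDot α (d b) = 0 := by rw [hα, haa, mul_zero]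
  have βa : planeDot β (d a) = 0 := by rw [hβ, haa, mul_zero]
  have βb : planeDot β (d b) = δ ^ 2 := by rw [hβ, ← hδdef]; ring
  have αm : planeDot α (d m) ≠ 0 := by
    rw [hα]; refine mul_ne_zero hδ ?_; rw [planeDet_swap]; exact neg_ne_zero.2 h3
  have αn : planeDot α (d n) ≠ 0 := by
    rw [hα]; refine mul_ne_zero hδ ?_; rw [planeDet_swap]; exact neg_ne_zero.2 h4
  have βm : planeDot β (d m) ≠ 0 := by
    rw [hβ]; exact mul_ne_zero hδ h1
  have βn : planeDot β (d n) ≠ 0 := by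
    rw [hβ]; exact mul_ne_zero hδ h2
  have hα0 : α ≠ 0 := by intro h; rw [h] at αm; simp [planeDot] at αm
  have hβ0 : β ≠ 0 := by intro h; rw [h] at βm; simp [planeDot] at βm
  -- linear models
  have lin : ∀ A B : ℝ, 0 < A → 0 < B → A * planeDot α (d m) + B * planeDot β (d m) < 0 →
      A * planeDot α (d n) + B * planeDot β (d n) < 0 → ∃ w c, IsPlaneModel d k s w c := by
    intro A B hA hB hAm hAn
    have hw : ∀ u, planeDot (A • α + B • β) u = A * planeDot α u + B * planeDot β u := by
      intro u; simp [planeDot]; ring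
    refine ⟨A • α + B • β, 0, fun i => Or.inl ?_, Or.inl ?_⟩
    · rw [hw]
      rcases huniv i with rfl | rfl | rfl | rfl
      · rw [αa, βa, ha]; nlinarith [mul_pos hA hδ2]
      · rw [αb, βb, hb]; nlinarith [mul_pos hB hδ2]
      · rw [hm]; linarith
      · rw [hn]; linarith
    · intro h0
      rw [← hw, h0] at hAm
      simp [planeDot] at hAm
  -- quadratic models
  have quad : ∀ e : ℝ, e ^ 2 = 1 → 0 < e * (planeDot α (d m) * planeDot β (d m)) →
      0 < e * (planeDot α (d n) * planeDot β (d n)) → ∃ w c, IsPlaneModel d k s w c := by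
    intro e he hem hen
    obtain ⟨M, ⟨hMm, hMn⟩, hM1⟩ := (((eventually_pos_mul_add hem
      (- (planeDot α (d m) ^ 2 + planeDot β (d m) ^ 2))).and (eventually_pos_mul_add hen
      (- (planeDot α (d n) ^ 2 + planeDot β (d n) ^ 2)))).and (eventually_gt_atTop (2 : ℝ))).exists
    let c : ℝ × ℝ × ℝ := (α.1 ^ 2 + β.1 ^ 2 - e * M * (α.1 * β.1),
      α.1 * α.2 + β.1 * β.2 - e * M * (α.1 * β.2 + α.2 * β.1) / 2,
      α.2 ^ 2 + β.2 ^ 2 - e * M * (α.2 * β.2))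
    have hc : ∀ u, planeForm c u = planeDot α u ^ 2 + planeDot β u ^ 2
        - e * M * (planeDot α u * planeDot β u) := by
      intro u
      simp only [c, planeForm, planeDot]
      ring
    refine ⟨0, c, fun i => Or.inr ⟨by simp [planeDot], ?_⟩, Or.inr ?_⟩
    · have hz : planeDot 0 (k i) = 0 := by simp [planeDot]
      rw [hz, hc]
      rcases huniv i with rfl | rfl | rfl | rfl
      · rw [αa, βa, ha]; nlinarith [mul_pos hδ2 hδ2]
      · rw [αb, βb, hb]; nlinarith [mul_pos hδ2 hδ2]
      · rw [hm]; linarith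
      · rw [hn]; linarith
    · have h5 : c.1 * c.2.2 - c.2.1 ^ 2 = (1 - M ^ 2 / 4) * (δ ^ 3) ^ 2 := by
        have : planeDet α β = δ ^ 3 := by
          simp only [α, β, planeDet, hδdef]; ring
        have h6 : c.1 * c.2.2 - c.2.1 ^ 2 = (1 - e ^ 2 * M ^ 2 / 4) * planeDet α β ^ 2 := by
          simp only [c, planeDet]; ring
        rw [h6, he, this]; ring
      rw [h5]
      refine mul_ne_zero ?_ (by positivity)
      nlinarith
  have mixed : ∀ x y, (∀ i, i = a ∨ i = b ∨ i = x ∨ i = y) →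
      0 < planeDot α (d x) * planeDot β (d x) →
      planeDot α (d y) * planeDot β (d y) < 0 → ∃ A B : ℝ, 0 < A ∧ 0 < B ∧
        A * planeDot α (d x) + B * planeDot β (d x) < 0 ∧
        A * planeDot α (d y) + B * planeDot β (d y) < 0 := by
    intro x y hu hx hy
    obtain ⟨i, hi⟩ := hbal α hα0
    obtain ⟨j, hj⟩ := hbal β hβ0
    have hxneg : planeDot α (d x) < 0 ∧ planeDot β (d x) < 0 := by
      rcases pos_and_pos_or_neg_and_neg_of_mul_pos hx with ⟨h5, h6⟩ | h5
      · exfalso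
        have hi' : planeDot α (d y) < 0 := by
          rcases hu i with rfl | rfl | rfl | rfl
          · rw [αa] at hi; linarith
          · rw [αb] at hi; linarith
          · linarith
          · exact hi
        have hj' : planeDot β (d y) < 0 := by
          rcases hu j with rfl | rfl | rfl | rfl
          · rw [βa] at hj; linarith
          · rw [βb] at hj; linarith
          · linarith
          · exact hj
        linarith [mul_pos_of_neg_of_neg hi' hj']
      · exact h5
    rcases mul_neg_iff.1 hy with ⟨h5, h6⟩ | ⟨h5, h6⟩
    · obtain ⟨M, hM, hM0⟩ := ((eventually_pos_mul_add (neg_pos.2 h6)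
        (- planeDot α (d y))).and (eventually_gt_atTop 0)).exists
      refine ⟨1, M, one_pos, hM0, ?_, by linarith⟩
      nlinarith [mul_pos hM0 (neg_pos.2 hxneg.2), hxneg.1]
    · obtain ⟨M, hM, hM0⟩ := ((eventually_pos_mul_add (neg_pos.2 h5)
        (- planeDot β (d y))).and (eventually_gt_atTop 0)).exists
      refine ⟨M, 1, hM0, one_pos, ?_, by linarith⟩
      nlinarith [mul_pos hM0 (neg_pos.2 hxneg.1), hxneg.2]
  rcases lt_or_gt_of_ne (mul_ne_zero αm βm) with hm1 | hm1 <;>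
    rcases lt_or_gt_of_ne (mul_ne_zero αn βn) with hn1 | hn1
  · exact quad (-1) (by norm_num) (by linarith) (by linarith)
  · obtain ⟨A, B, hA, hB, h5, h6⟩ := mixed n m (fun i => by have := huniv i; tauto) hn1 hm1
    exact lin A B hA hB h6 h5
  · obtain ⟨A, B, hA, hB, h5, h6⟩ := mixed m n huniv hm1 hn1
    exact lin A B hA hB h5 h6
  · exact quad 1 (by norm_num) (by linarith) (by linarith)

theorem exists_isPlaneModel [Fintype ι] (hd0 : ∀ i, d i ≠ 0) (hd : PlaneDistinct d)
    (hcard : Fintype.card ι ≤ 4) (hbal : Fintype.card ι = 4 → PlaneBalanced d)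
    (hpair : Fintype.card ι = 4 → PlanePaired d) (hs : ∀ i, s i = 1 ∨ s i = -1)
    (k : ι → ℝ × ℝ) : ∃ w c, IsPlaneModel d k s w c := by
  classical
  suffices H : ∀ s : ι → ℝ, (∀ i, s i = 1 ∨ s i = -1) →
      (Finset.univ.filter fun i => s i = -1).card ≤ (Finset.univ.filter fun i => s i = 1).card →
      ∃ w c, IsPlaneModel d k s w c by
    rcases le_total (Finset.univ.filter fun i => s i = -1).card
      (Finset.univ.filter fun i => s i = 1).card with h | h
    · exact H s hs h
    · obtain ⟨w, c, hwc⟩ := H (fun i => - s i)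
        (fun i => by rcases hs i with h | h <;> rw [h] <;> norm_num)
        (by simpa [neg_eq_iff_eq_neg] using h)
      exact ⟨-w, -c, hwc.neg⟩
  intro s hs hle
  have hsum : (Finset.univ.filter fun i => s i = 1).card +
      (Finset.univ.filter fun i => s i = -1).card = Fintype.card ι := by
    rw [← Finset.card_univ, ← Finset.card_filter_add_card_filter_not (s := Finset.univ)
      (fun i => s i = 1)]
    congr 2
    ext i
    simp only [Finset.mem_filter, Finset.mem_univ, true_and]
    rcases hs i with h | h <;> rw [h] <;> norm_num
  have hmem : ∀ (t : ℝ) i, i ∈ (Finset.univ.filter fun i => s i = t) ↔ s i = t := by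
    intro t i; simp
  have hle2 : (Finset.univ.filter fun i => s i = -1).card ≤ 2 := by omega
  interval_cases hD : (Finset.univ.filter fun i => s i = -1).card
  · refine exists_isPlaneModel_of_all_pos hd0 (fun i => (hs i).resolve_right fun h => ?_) k
    rw [Finset.card_eq_zero] at hD
    have := (hmem (-1) i).2 h
    rw [hD] at this
    simp at this
  · obtain ⟨m, hm⟩ := Finset.card_eq_one.1 hD
    refine exists_isPlaneModel_of_one_neg hd0 hd hcard hpair (m := m) ?_ ?_ k
    · rw [← hmem, hm]; simp
    · intro i hi
      refine (hs i).resolve_right fun h => hi ?_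
      rw [← hmem, hm] at h
      simpa using h
  · obtain ⟨m, n, -, hmn'⟩ := Finset.card_eq_two.1 hD
    obtain ⟨a, b, hab, hab'⟩ := Finset.card_eq_two.1
      (show (Finset.univ.filter fun i => s i = 1).card = 2 by omega)
    have h4 : Fintype.card ι = 4 := by omega
    have hsa : s a = 1 := by rw [← hmem, hab']; simp
    have hsb : s b = 1 := by rw [← hmem, hab']; simp
    have hsm : s m = -1 := by rw [← hmem, hmn']; simp
    have hsn : s n = -1 := by rw [← hmem, hmn']; simp
    have hne : ∀ i j, s i = 1 → s j = -1 → i ≠ j := by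
      rintro i j hi hj rfl
      rw [hi] at hj
      norm_num at hj
    refine exists_isPlaneModel_of_two_two hd (hbal h4) (hpair h4) (a := a) (b := b) (m := m)
      (n := n) (fun i => ?_) hab (hne _ _ hsa hsm) (hne _ _ hsa hsn) (hne _ _ hsb hsm)
      (hne _ _ hsb hsn) hsa hsb hsm hsn k
    rcases hs i with h | h
    · rw [← hmem, hab'] at h
      simp at h
      tauto
    · rw [← hmem, hmn'] at h
      simp at h
      tauto

end PlaneModel

/-! ### Monotone functions on the unit interval -/

theorem eventually_deriv_pos_of_second_order {g : ℝ → ℝ} (hg : ContDiffOn ℝ ∞ g (Icc 0 1)) {s : ℝ}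
    (h : 0 < s * derivWithin g (Icc 0 1) 0 ∨ derivWithin g (Icc 0 1) 0 = 0 ∧
      0 < s * derivWithin (derivWithin g (Icc 0 1)) (Icc 0 1) 0) :
    ∀ᶠ t in 𝓝[>] (0 : ℝ), 0 < s * deriv g t := by
  have hu : UniqueDiffOn ℝ (Icc (0 : ℝ) 1) := uniqueDiffOn_Icc zero_lt_one
  have hg' : ContDiffOn ℝ ∞ (derivWithin g (Icc 0 1)) (Icc 0 1) := hg.derivWithin hu (by simp)
  have h0 : (0 : ℝ) ∈ Icc (0 : ℝ) 1 := by simp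
  have hIoo : Ioo (0 : ℝ) 1 ∈ 𝓝[>] (0 : ℝ) := Ioo_mem_nhdsGT zero_lt_one
  have hle : 𝓝[>] (0 : ℝ) ≤ 𝓝[Icc 0 1] 0 := by
    rw [← nhdsWithin_Ioo_eq_nhdsGT (zero_lt_one (α := ℝ))]
    exact nhdsWithin_mono _ Ioo_subset_Icc_self
  suffices H : ∀ᶠ t in 𝓝[>] (0 : ℝ), 0 < s * derivWithin g (Icc 0 1) t by
    filter_upwards [H, hIoo] with t ht ht'
    rwa [derivWithin_of_mem_nhds (Icc_mem_nhds ht'.1 ht'.2)] at ht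
  rcases h with h | ⟨h1, h2⟩
  · have hc : Tendsto (fun t => s * derivWithin g (Icc 0 1) t) (𝓝[Icc 0 1] 0)
        (𝓝 (s * derivWithin g (Icc 0 1) 0)) := (hg'.continuousOn 0 h0).const_mul s
    exact (hc.mono_left hle).eventually_const_lt h
  · have hd : HasDerivWithinAt (derivWithin g (Icc 0 1))
        (derivWithin (derivWithin g (Icc 0 1)) (Icc 0 1) 0) (Icc 0 1) 0 :=
      (hg'.differentiableOn (by simp) 0 h0).hasDerivWithinAt
    have hd2 := hd.mono (Ioo_subset_Icc_self (a := (0 : ℝ)) (b := 1))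
    rw [hasDerivWithinAt_iff_tendsto_slope' (by simp), nhdsWithin_Ioo_eq_nhdsGT zero_lt_one] at hd2
    filter_upwards [(hd2.const_mul s).eventually_const_lt h2, hIoo] with t ht ht'
    rw [slope_def_field, h1, sub_zero, sub_zero, ← mul_div_assoc] at ht
    exact (div_pos_iff_of_pos_right ht'.1).1 ht

/-- Two increasing functions can be joined by an increasing function. -/
theorem exists_increasing_glue {g₀ g₁ : ℝ → ℝ} (h₀ : ContDiffOn ℝ ∞ g₀ (Icc 0 1))
    (h₁ : ContDiffOn ℝ ∞ g₁ (Icc 0 1)) (hlt : g₀ 0 < g₁ 1)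
    (hd₀ : ∀ᶠ t in 𝓝[>] (0 : ℝ), 0 < deriv g₀ t) (hd₁ : ∀ᶠ t in 𝓝[<] (1 : ℝ), 0 < deriv g₁ t) :
    ∃ H : ℝ → ℝ, ContDiffOn ℝ ∞ H (Ioo 0 1) ∧ (∀ᶠ t in 𝓝[>] (0 : ℝ), H t = g₀ t) ∧
      (∀ᶠ t in 𝓝[<] (1 : ℝ), H t = g₁ t) ∧ ∀ t ∈ Ioo (0 : ℝ) 1, 0 < deriv H t := by
  set Δ := g₁ 1 - g₀ 0 with hΔ
  have hΔ0 : 0 < Δ := sub_pos.2 hlt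
  have hb₀ : ∀ᶠ t in 𝓝[>] (0 : ℝ), g₀ t < g₀ 0 + Δ / 3 := by
    have hc : Tendsto g₀ (𝓝[>] 0) (𝓝 (g₀ 0)) := by
      rw [← nhdsWithin_Ioo_eq_nhdsGT (zero_lt_one (α := ℝ))]
      exact (h₀.continuousOn 0 (by simp)).mono_left (nhdsWithin_mono _ Ioo_subset_Icc_self)
    exact hc.eventually_lt_const (by linarith)
  have hb₁ : ∀ᶠ t in 𝓝[<] (1 : ℝ), g₁ 1 - Δ / 3 < g₁ t := by
    have hc : Tendsto g₁ (𝓝[<] 1) (𝓝 (g₁ 1)) := by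
      rw [← nhdsWithin_Ioo_eq_nhdsLT (zero_lt_one (α := ℝ))]
      exact (h₁.continuousOn 1 (by simp)).mono_left (nhdsWithin_mono _ Ioo_subset_Icc_self)
    exact hc.eventually_const_lt (by linarith)
  obtain ⟨a, ha, ha'⟩ := mem_nhdsGT_iff_exists_Ioo_subset.1 (hd₀.and hb₀)
  obtain ⟨b, hb, hb'⟩ := mem_nhdsLT_iff_exists_Ioo_subset.1 (hd₁.and hb₁)
  rw [mem_Ioi] at ha
  rw [mem_Iio] at hb
  obtain ⟨ε, hε, hεa, hεb, hε1⟩ : ∃ ε > 0, 2 * ε < a ∧ b < 1 - 2 * ε ∧ 4 * ε < 1 :=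
    ⟨min (1 / 8) (min (a / 4) ((1 - b) / 4)), lt_min (by norm_num)
      (lt_min (by linarith) (by linarith)),
      by linarith [(min_le_right (1 / 8 : ℝ) _).trans (min_le_left (a / 4) ((1 - b) / 4))],
      by linarith [(min_le_right (1 / 8 : ℝ) _).trans (min_le_right (a / 4) ((1 - b) / 4))],
      by linarith [min_le_left (1 / 8 : ℝ) (min (a / 4) ((1 - b) / 4))]⟩
  have hg₀ : ∀ t, 0 < t → t ≤ 2 * ε → 0 < deriv g₀ t ∧ g₀ t < g₀ 0 + Δ / 3 := fun t h1 h2 =>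
    ha' ⟨h1, by linarith⟩
  have hg₁ : ∀ t, 1 - 2 * ε ≤ t → t < 1 → 0 < deriv g₁ t ∧ g₁ 1 - Δ / 3 < g₁ t := fun t h1 h2 =>
    hb' ⟨by linarith, h2⟩
  let χ : ℝ → ℝ → ℝ := fun c t => Real.smoothTransition ((t - c) / ε)
  have hχ : ∀ c, ContDiff ℝ ∞ (χ c) := fun c =>
    Real.smoothTransition.contDiff.comp ((contDiff_id.sub contDiff_const).div_const ε)
  have hχ0 : ∀ c t, t ≤ c → χ c t = 0 := fun c t h =>
    Real.smoothTransition.zero_of_nonpos (div_nonpos_of_nonpos_of_nonneg (by linarith) hε.le)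
  have hχ1 : ∀ c t, c + ε ≤ t → χ c t = 1 := fun c t h =>
    Real.smoothTransition.one_of_one_le (by rw [le_div_iff₀ hε]; linarith)
  have hχm : ∀ c, Monotone (χ c) := fun c x y h =>
    Real.smoothTransition.monotone (div_le_div_of_nonneg_right (by linarith) hε.le)
  have hχn : ∀ c t, 0 ≤ χ c t := fun c t => Real.smoothTransition.nonneg _
  have hχl : ∀ c t, χ c t ≤ 1 := fun c t => Real.smoothTransition.le_one _
  have hχd : ∀ c t, 0 ≤ deriv (χ c) t := fun c t => (hχm c).deriv_nonneg
  have hχd0 : ∀ c t, t < c → deriv (χ c) t = 0 := fun c t h => by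
    have : χ c =ᶠ[𝓝 t] fun _ => 0 := by
      filter_upwards [eventually_lt_nhds h] with u hu using hχ0 c u hu.le
    rw [this.deriv_eq, deriv_const]
  have hχd1 : ∀ c t, c + ε < t → deriv (χ c) t = 0 := fun c t h => by
    have : χ c =ᶠ[𝓝 t] fun _ => 1 := by
      filter_upwards [eventually_gt_nhds h] with u hu using hχ1 c u hu.le
    rw [this.deriv_eq, deriv_const]
  let l : ℝ → ℝ := fun t => g₀ 0 + Δ / 3 + t * (Δ / 3)
  have hl : ∀ t, HasDerivAt l (Δ / 3) t := fun t => by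
    have := ((hasDerivAt_id t).mul_const (Δ / 3)).const_add (g₀ 0 + Δ / 3)
    rwa [one_mul] at this
  have hlc : ContDiff ℝ ∞ l := contDiff_const.add (contDiff_id.mul contDiff_const)
  let H : ℝ → ℝ := fun t => (1 - χ ε t) * g₀ t + (χ ε t - χ (1 - 2 * ε) t) * l t
    + χ (1 - 2 * ε) t * g₁ t
  refine ⟨H, ?_, ?_, ?_, ?_⟩
  · have k₀ := h₀.mono Ioo_subset_Icc_self
    have k₁ := h₁.mono Ioo_subset_Icc_self
    exact (((contDiff_const.sub (hχ _)).contDiffOn.mul k₀).add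
      (((hχ _).sub (hχ _)).mul hlc).contDiffOn).add ((hχ _).contDiffOn.mul k₁)
  · filter_upwards [Ioo_mem_nhdsGT hε] with t ht
    simp only [H]
    rw [hχ0 ε t ht.2.le, hχ0 _ t (by linarith [ht.2])]
    ring
  · filter_upwards [Ioo_mem_nhdsLT (show 1 - ε < 1 by linarith)] with t ht
    simp only [H]
    rw [hχ1 ε t (by linarith [ht.1]), hχ1 _ t (by linarith [ht.1])]
    ring
  · intro t ht
    have hI : Icc (0 : ℝ) 1 ∈ 𝓝 t := Icc_mem_nhds ht.1 ht.2
    have e₀ := ((h₀.contDiffAt hI).differentiableAt (by simp)).hasDerivAt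
    have e₁ := ((h₁.contDiffAt hI).differentiableAt (by simp)).hasDerivAt
    have eχ : ∀ c, HasDerivAt (χ c) (deriv (χ c) t) t := fun c =>
      ((hχ c).differentiable (by simp) t).hasDerivAt
    have e := ((((eχ ε).const_sub 1).mul e₀).add
      (((eχ ε).sub (eχ (1 - 2 * ε))).mul (hl t))).add ((eχ (1 - 2 * ε)).mul e₁)
    have hlt1 : l t - (g₀ 0 + Δ / 3) = t * (Δ / 3) := by simp only [l]; ring
    have hlt2 : g₁ 1 - Δ / 3 - l t = (1 - t) * (Δ / 3) := by simp only [l, hΔ]; ring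
    have p1 : 0 < t * (Δ / 3) := mul_pos ht.1 (by linarith)
    have p2 : 0 < (1 - t) * (Δ / 3) := mul_pos (by linarith [ht.2]) (by linarith)
    have hval : deriv H t = (1 - χ ε t) * deriv g₀ t + (χ ε t - χ (1 - 2 * ε) t) * (Δ / 3)
        + χ (1 - 2 * ε) t * deriv g₁ t + deriv (χ ε) t * (l t - g₀ t)
        + deriv (χ (1 - 2 * ε)) t * (g₁ t - l t) := by
      refine e.deriv.trans ?_
      rw [Pi.sub_apply]
      ring
    rw [hval]
    rcases le_or_gt t (2 * ε) with c1 | c1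
    · rw [hχ0 _ t (show t ≤ 1 - 2 * ε by linarith),
        hχd0 _ t (show t < 1 - 2 * ε by linarith)]
      obtain ⟨q1, q2⟩ := hg₀ t ht.1 c1
      have q3 : 0 ≤ deriv (χ ε) t * (l t - g₀ t) := mul_nonneg (hχd _ _) (by linarith)
      rcases (hχl ε t).lt_or_eq with q4 | q4
      · have := mul_pos (sub_pos.2 q4) q1
        have := mul_nonneg (hχn ε t) (show 0 ≤ Δ / 3 by linarith)
        linarith
      · rw [q4] at *
        linarith
    · rw [hχ1 ε t (by linarith), hχd1 ε t (by linarith)]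
      rcases lt_or_ge t (1 - 2 * ε) with c2 | c2
      · rw [hχ0 _ t c2.le, hχd0 _ t c2]
        linarith
      · obtain ⟨q1, q2⟩ := hg₁ t c2 ht.2
        have q3 : 0 ≤ deriv (χ (1 - 2 * ε)) t * (g₁ t - l t) :=
          mul_nonneg (hχd _ _) (by linarith)
        rcases (hχl (1 - 2 * ε) t).lt_or_eq with q4 | q4
        · have := mul_pos (sub_pos.2 q4) (show 0 < Δ / 3 by linarith)
          have := mul_nonneg (hχn (1 - 2 * ε) t) q1.le
          linarith
        · rw [q4] at *
          linarith

/-- Two functions which are monotone in the same direction, given by the sign `σ`, can be joined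
by a function which is monotone in this direction. -/
theorem exists_monotone_glue {g₀ g₁ : ℝ → ℝ} {σ : ℝ} (hσ : σ = 1 ∨ σ = -1)
    (h₀ : ContDiffOn ℝ ∞ g₀ (Icc 0 1)) (h₁ : ContDiffOn ℝ ∞ g₁ (Icc 0 1))
    (hlt : 0 < σ * (g₁ 1 - g₀ 0)) (hd₀ : ∀ᶠ t in 𝓝[>] (0 : ℝ), 0 < σ * deriv g₀ t)
    (hd₁ : ∀ᶠ t in 𝓝[<] (1 : ℝ), 0 < σ * deriv g₁ t) :
    ∃ H : ℝ → ℝ, ContDiffOn ℝ ∞ H (Ioo 0 1) ∧ (∀ᶠ t in 𝓝[>] (0 : ℝ), H t = g₀ t) ∧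
      (∀ᶠ t in 𝓝[<] (1 : ℝ), H t = g₁ t) ∧ ∀ t ∈ Ioo (0 : ℝ) 1, 0 < σ * deriv H t := by
  rcases hσ with rfl | rfl
  · simp only [one_mul] at *
    exact exists_increasing_glue h₀ h₁ (by linarith) hd₀ hd₁
  · obtain ⟨H, k1, k2, k3, k4⟩ := exists_increasing_glue h₀.neg h₁.neg
      (show -g₀ 0 < -g₁ 1 by linarith)
      (by filter_upwards [hd₀] with t ht; simpa [deriv.neg] using ht)
      (by filter_upwards [hd₁] with t ht; simpa [deriv.neg] using ht)
    refine ⟨-H, k1.neg, ?_, ?_, ?_⟩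
    · filter_upwards [k2] with t ht; simp [ht]
    · filter_upwards [k3] with t ht; simp [ht]
    · intro t ht
      rw [deriv.neg]
      linarith [k4 t ht]

/-! ### The local model of a Morse function at a vertex -/

/-- A quadratic function in the coordinates with respect to `a` and `b`. -/
noncomputable def frameQuadratic (a b : E3) (w : ℝ × ℝ) (c : ℝ × ℝ × ℝ) (x : E3) : ℝ :=
  planeDot w (inner ℝ a x, inner ℝ b x) + planeForm c (inner ℝ a x, inner ℝ b x)

/-- `a` and `b` complete the unit vector `p` to an orthonormal basis. -/
structure IsFrame (p a b : E3) : Prop where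
  inner_eq : ∀ u v : E3, inner ℝ u v =
    inner ℝ p u * inner ℝ p v + inner ℝ a u * inner ℝ a v + inner ℝ b u * inner ℝ b v
  pp : inner ℝ p p = 1
  aa : inner ℝ a a = 1
  bb : inner ℝ b b = 1
  ap : inner ℝ a p = 0
  bp : inner ℝ b p = 0
  ab : inner ℝ a b = 0

theorem exists_isFrame {p : E3} (hp : ‖p‖ = 1) : ∃ a b, IsFrame p a b := by
  have h1 : Orthonormal ℝ (({0} : Set (Fin 3)).domRestrict (fun _ => p)) := by
    constructor
    · intro i; exact hp
    · intro i j hij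
      exact absurd (Subsingleton.elim i j) hij
  obtain ⟨e, he⟩ := h1.exists_orthonormalBasis_extension_of_card_eq (by simp)
  have h0 : e 0 = p := he 0 rfl
  have ho := e.orthonormal
  have hself : ∀ i, inner ℝ (e i) (e i) = 1 := fun i => by
    rw [real_inner_self_eq_norm_sq, ho.1 i]; norm_num
  refine ⟨e 1, e 2, fun u v => ?_, ?_, hself 1, hself 2, ?_, ?_, ho.2 (by decide)⟩
  · rw [← e.sum_inner_mul_inner u v, Fin.sum_univ_three, h0]
    simp only [real_inner_comm]
  · rw [← h0]; exact hself 0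
  · rw [← h0]; exact ho.2 (by decide)
  · rw [← h0]; exact ho.2 (by decide)

theorem contDiff_frameQuadratic (a b : E3) (w : ℝ × ℝ) (c : ℝ × ℝ × ℝ) :
    ContDiff ℝ ∞ (frameQuadratic a b w c) := by
  have ha : ContDiff ℝ ∞ fun x : E3 => inner ℝ a x := contDiff_const.inner ℝ contDiff_id
  have hb : ContDiff ℝ ∞ fun x : E3 => inner ℝ b x := contDiff_const.inner ℝ contDiff_id
  unfold frameQuadratic planeDot planeForm
  fun_prop

section

variable {p a b : E3} {w : ℝ × ℝ} {c : ℝ × ℝ × ℝ}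

/-- The symmetric bilinear form of a quadratic form in the coordinates with respect to `a`
and `b`. -/
noncomputable def frameBilin (a b : E3) (c : ℝ × ℝ × ℝ) : E3 →L[ℝ] E3 →L[ℝ] ℝ :=
  c.1 • (innerSL ℝ a).smulRight (innerSL ℝ a) + c.2.1 • (innerSL ℝ a).smulRight (innerSL ℝ b)
    + c.2.1 • (innerSL ℝ b).smulRight (innerSL ℝ a) + c.2.2 • (innerSL ℝ b).smulRight (innerSL ℝ b)

theorem frameBilin_apply (u v : E3) : frameBilin a b c u v =
    c.1 * inner ℝ a u * inner ℝ a v + c.2.1 * inner ℝ a u * inner ℝ b v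
      + c.2.1 * inner ℝ b u * inner ℝ a v + c.2.2 * inner ℝ b u * inner ℝ b v := by
  simp [frameBilin]
  ring

theorem fderiv_frameQuadratic :
    fderiv ℝ (frameQuadratic a b w c) = fun x =>
      (w.1 • innerSL ℝ a + w.2 • innerSL ℝ b) + (2 : ℝ) • frameBilin a b c x := by
  funext x
  have ha : HasFDerivAt (fun x : E3 => inner ℝ a x) (innerSL ℝ a) x := (innerSL ℝ a).hasFDerivAt
  have hb : HasFDerivAt (fun x : E3 => inner ℝ b x) (innerSL ℝ b) x := (innerSL ℝ b).hasFDerivAt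
  have h := ((ha.const_mul w.1).add (hb.const_mul w.2)).add
    ((((ha.pow 2).const_mul c.1).add ((ha.const_mul (2 * c.2.1)).mul hb)).add
      ((hb.pow 2).const_mul c.2.2))
  refine (HasFDerivAt.fderiv (f := frameQuadratic a b w c) h).trans ?_
  ext v
  simp [frameBilin_apply]
  ring

theorem fderiv_fderiv_frameQuadratic (x : E3) :
    fderiv ℝ (fderiv ℝ (frameQuadratic a b w c)) x = (2 : ℝ) • frameBilin a b c := by
  rw [fderiv_frameQuadratic]
  exact (((2 : ℝ) • frameBilin a b c).hasFDerivAt.const_add _).fderiv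

theorem frameQuadratic_self (h : IsFrame p a b) : frameQuadratic a b w c p = 0 := by
  simp [frameQuadratic, planeDot, planeForm, h.ap, h.bp]

theorem frameQuadratic_critical_iff (h : IsFrame p a b) :
    IsSphereCritical (frameQuadratic a b w c) p ↔ w = 0 := by
  have hv : ∀ v, fderiv ℝ (frameQuadratic a b w c) p v
      = w.1 * inner ℝ a v + w.2 * inner ℝ b v := by
    intro v
    rw [fderiv_frameQuadratic]
    simp [frameBilin_apply, h.ap, h.bp]
  constructor
  · intro hc
    have h1 := hc a (by rw [real_inner_comm, h.ap])
    have h2 := hc b (by rw [real_inner_comm, h.bp])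
    rw [hv, h.aa, real_inner_comm, h.ab] at h1
    rw [hv, h.bb, h.ab] at h2
    ext1 <;> simp <;> linarith
  · rintro rfl v -
    rw [hv]
    simp

theorem frameQuadratic_nondegenerate (h : IsFrame p a b)
    (hc : c.1 * c.2.2 - c.2.1 ^ 2 ≠ 0) : IsSphereNondegenerate (frameQuadratic a b w c) p := by
  intro u hu hu0
  have hpp : fderiv ℝ (frameQuadratic a b w c) p p = 0 := by
    rw [fderiv_frameQuadratic]
    simp [frameBilin_apply, h.ap, h.bp]
  set X := inner ℝ a u with hX
  set Y := inner ℝ b u with hY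
  set α := c.1 * X + c.2.1 * Y with hα
  set β := c.2.1 * X + c.2.2 * Y with hβ
  refine ⟨α • a + β • b, ?_, ?_⟩
  · rw [inner_add_right, inner_smul_right, inner_smul_right, real_inner_comm, h.ap,
      real_inner_comm, h.bp]
    ring
  · rw [hpp, fderiv_fderiv_frameQuadratic]
    have h1 : inner ℝ a (α • a + β • b) = α := by
      rw [inner_add_right, inner_smul_right, inner_smul_right, h.aa, h.ab]; ring
    have h2 : inner ℝ b (α • a + β • b) = β := by
      rw [inner_add_right, inner_smul_right, inner_smul_right, h.bb, real_inner_comm, h.ab]; ring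
    have h3 : (2 : ℝ) * (α ^ 2 + β ^ 2) ≠ 0 := by
      intro h0
      have hα0 : α = 0 := by nlinarith [sq_nonneg α, sq_nonneg β]
      have hβ0 : β = 0 := by nlinarith [sq_nonneg α, sq_nonneg β]
      have hX0 : X = 0 := by
        have : (c.1 * c.2.2 - c.2.1 ^ 2) * X = c.2.2 * α - c.2.1 * β := by rw [hα, hβ]; ring
        rw [hα0, hβ0] at this
        simpa [hc] using this
      have hY0 : Y = 0 := by
        have : (c.1 * c.2.2 - c.2.1 ^ 2) * Y = c.1 * β - c.2.1 * α := by rw [hα, hβ]; ring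
        rw [hα0, hβ0] at this
        simpa [hc] using this
      have huu := h.inner_eq u u
      rw [hu, ← hX, ← hY, hX0, hY0] at huu
      apply hu0
      simpa using huu
    convert h3 using 1
    simp only [smul_apply, smul_eq_mul, frameBilin_apply, h1, h2, ← hX, ← hY]
    rw [hα, hβ]
    ring

theorem frameQuadratic_isolated (h : IsFrame p a b)
    (hwc : w ≠ 0 ∨ c.1 * c.2.2 - c.2.1 ^ 2 ≠ 0) :
    (∀ᶠ y in 𝓝[≠] p, ‖y‖ = 1 → ¬ IsSphereCritical (frameQuadratic a b w c) y) ∧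
    (IsSphereCritical (frameQuadratic a b w c) p →
      IsSphereNondegenerate (frameQuadratic a b w c) p) := by
  have hp : ‖p‖ = 1 := by
    have := h.pp
    rw [real_inner_self_eq_norm_sq] at this
    nlinarith [norm_nonneg p]
  have hF := contDiff_frameQuadratic a b w c
  by_cases hw : w = 0
  · have hn := frameQuadratic_nondegenerate (w := w) h (hwc.resolve_left (not_not.2 hw))
    exact ⟨eventually_not_isSphereCritical hF hn, fun _ => hn⟩
  · have hnc := mt (frameQuadratic_critical_iff (c := c) h).1 hw
    refine ⟨?_, fun hc => absurd hc hnc⟩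
    rw [isSphereCritical_iff_tangentialPart hp] at hnc
    have hcont : Continuous fun y => tangentialPart (fderiv ℝ (frameQuadratic a b w c) y) y :=
      continuous_tangentialPart.comp ((hF.continuous_fderiv (by simp)).prodMk continuous_id)
    refine ((hcont.continuousAt.eventually_ne hnc).filter_mono nhdsWithin_le_nhds).mono
      fun y hy hy1 hcy => hy ((isSphereCritical_iff_tangentialPart hy1).1 hcy)

end

/-- The second order expansion of a quadratic function along a path in the plane. -/
theorem derivWithin_quadratic {X Y : ℝ → ℝ} (hX : ContDiffOn ℝ ∞ X (Icc 0 1))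
    (hY : ContDiffOn ℝ ∞ Y (Icc 0 1)) (hX0 : X 0 = 0) (hY0 : Y 0 = 0) (w : ℝ × ℝ)
    (c : ℝ × ℝ × ℝ) :
    let D : (ℝ → ℝ) → ℝ → ℝ := fun g => derivWithin g (Icc 0 1)
    let g : ℝ → ℝ := fun t => planeDot w (X t, Y t) + planeForm c (X t, Y t)
    D g 0 = planeDot w (D X 0, D Y 0) ∧
    D (D g) 0 = planeDot w (D (D X) 0, D (D Y) 0) + 2 * planeForm c (D X 0, D Y 0) := by
  intro D g
  have hu : UniqueDiffOn ℝ (Icc (0 : ℝ) 1) := uniqueDiffOn_Icc zero_lt_one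
  have h0 : (0 : ℝ) ∈ Icc (0 : ℝ) 1 := by simp
  have key : ∀ Z : ℝ → ℝ, ContDiffOn ℝ ∞ Z (Icc 0 1) → ∀ t ∈ Icc (0 : ℝ) 1,
      HasDerivWithinAt Z (D Z t) (Icc 0 1) t := fun Z hZ t ht =>
    (hZ.differentiableOn (by simp) t ht).hasDerivWithinAt
  have hX' : ContDiffOn ℝ ∞ (D X) (Icc 0 1) := hX.derivWithin hu (by simp)
  have hY' : ContDiffOn ℝ ∞ (D Y) (Icc 0 1) := hY.derivWithin hu (by simp)
  have h1 : ∀ t ∈ Icc (0 : ℝ) 1, D g t = w.1 * D X t + w.2 * D Y t +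
      (c.1 * (2 * X t * D X t) + 2 * c.2.1 * (D X t * Y t + X t * D Y t)
        + c.2.2 * (2 * Y t * D Y t)) := by
    intro t ht
    have kX := key X hX t ht
    have kY := key Y hY t ht
    have := ((kX.const_mul w.1).add (kY.const_mul w.2)).add
      ((((kX.pow 2).const_mul c.1).add ((kX.const_mul (2 * c.2.1)).mul kY)).add
        ((kY.pow 2).const_mul c.2.2))
    refine (HasDerivWithinAt.derivWithin (f := g) this (hu t ht)).trans ?_
    simp
    ring
  refine ⟨?_, ?_⟩
  · rw [h1 0 h0, hX0, hY0]
    simp [planeDot]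
  · have e : D (D g) 0 = D (fun t => w.1 * D X t + w.2 * D Y t +
      (c.1 * (2 * X t * D X t) + 2 * c.2.1 * (D X t * Y t + X t * D Y t)
        + c.2.2 * (2 * Y t * D Y t))) 0 := derivWithin_congr h1 (h1 0 h0)
    rw [e]
    have kX := key X hX 0 h0
    have kY := key Y hY 0 h0
    have kX' := key _ hX' 0 h0
    have kY' := key _ hY' 0 h0
    have := ((kX'.const_mul w.1).add (kY'.const_mul w.2)).add
      (((((kX.const_mul 2).mul kX').const_mul c.1).add
        (((kX'.mul kY).add (kX.mul kY')).const_mul (2 * c.2.1))).add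
        (((kY.const_mul 2).mul kY').const_mul c.2.2))
    refine (HasDerivWithinAt.derivWithin this (hu 0 h0)).trans ?_
    rw [hX0, hY0]
    simp [planeDot, planeForm]
    ring

/-! ### Edge-ends -/

/-- A path parametrised by `[0, 1]`, traversed from its first point (`false`) or backwards from
its last point (`true`), as a path in the ambient space. -/
def endPath (γ : ℝ → S2) : Bool → ℝ → E3
  | false => fun t => γ t
  | true => fun t => γ (1 - t)

section EndPath

variable {γ : ℝ → S2}

theorem mapsTo_one_sub_Icc : MapsTo (fun t : ℝ => 1 - t) (Icc 0 1) (Icc 0 1) := fun t ht =>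
  ⟨by linarith [ht.2], by linarith [ht.1]⟩

theorem contDiffOn_endPath (hγ : ContDiffOn ℝ ∞ (fun t => (γ t : E3)) (Icc 0 1)) (b : Bool) :
    ContDiffOn ℝ ∞ (endPath γ b) (Icc 0 1) := by
  cases b
  · exact hγ
  · exact hγ.comp (contDiff_const.sub contDiff_id).contDiffOn mapsTo_one_sub_Icc

theorem endPath_zero (b : Bool) : endPath γ b 0 = pathEnd γ b := by
  cases b <;> simp [endPath, pathEnd]

theorem inner_endPath_self (b : Bool) (t : ℝ) : inner ℝ (endPath γ b t) (endPath γ b t) = 1 := by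
  rw [real_inner_self_eq_norm_sq]
  cases b <;> simp [endPath]

theorem derivWithin_endPath (hγ : ContDiffOn ℝ ∞ (fun t => (γ t : E3)) (Icc 0 1)) (b : Bool) :
    derivWithin (endPath γ b) (Icc 0 1) 0 = pathEndDir γ b := by
  have hu : UniqueDiffOn ℝ (Icc (0 : ℝ) 1) := uniqueDiffOn_Icc zero_lt_one
  cases b
  · rfl
  · have h1 : HasDerivWithinAt (fun t => (γ t : E3)) (pathVelocity γ 1) (Icc 0 1) (1 - 0) := by
      rw [sub_zero]
      exact (hγ.differentiableOn (by simp) 1 (by simp)).hasDerivWithinAt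
    have h2 : HasDerivWithinAt (fun t : ℝ => 1 - t) (-1) (Icc 0 1) 0 :=
      ((hasDerivAt_id (0 : ℝ)).const_sub 1).hasDerivWithinAt
    have h3 := h1.scomp 0 h2 mapsTo_one_sub_Icc
    rw [neg_one_smul] at h3
    exact h3.derivWithin (hu 0 (by simp))

theorem inner_pathEnd_pathEndDir (hγ : ContDiffOn ℝ ∞ (fun t => (γ t : E3)) (Icc 0 1))
    (b : Bool) : inner ℝ (pathEnd γ b : E3) (pathEndDir γ b) = 0 := by
  have hu : UniqueDiffOn ℝ (Icc (0 : ℝ) 1) := uniqueDiffOn_Icc zero_lt_one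
  have h1 := ((contDiffOn_endPath hγ b).differentiableOn (by simp) 0 (by simp)).hasDerivWithinAt
  rw [derivWithin_endPath hγ] at h1
  have h2 := (h1.inner ℝ h1).derivWithin (hu 0 (by simp))
  have h3 : (fun t => inner ℝ (endPath γ b t) (endPath γ b t)) = fun _ => (1 : ℝ) :=
    funext fun t => inner_endPath_self b t
  rw [h3, endPath_zero, real_inner_comm] at h2
  simp at h2
  rw [real_inner_comm]
  linarith

theorem pathEndDir_ne_zero (h : ∀ t ∈ Icc (0 : ℝ) 1, pathVelocity γ t ≠ 0) (b : Bool) :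
    pathEndDir γ b ≠ 0 := by
  cases b
  · exact h 0 (by simp)
  · exact neg_ne_zero.2 (h 1 (by simp))

end EndPath

section Frame

variable {p a b : E3}

theorem IsFrame.planeDot_eq (h : IsFrame p a b) {u v : E3} (hu : inner ℝ p u = 0) :
    planeDot (inner ℝ a u, inner ℝ b u) (inner ℝ a v, inner ℝ b v) = inner ℝ u v := by
  rw [h.inner_eq u v, hu]
  simp [planeDot]

theorem IsFrame.sameRay (h : IsFrame p a b) {u v : E3} (hu : inner ℝ p u = 0)
    (hv : inner ℝ p v = 0)
    (hdet : planeDet (inner ℝ a u, inner ℝ b u) (inner ℝ a v, inner ℝ b v) = 0)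
    (hdot : 0 ≤ inner ℝ u v) : SameRay ℝ u v := by
  have h1 := h.planeDot_eq (v := v) hu
  have h2 := h.planeDot_eq (v := u) hu
  have h3 := h.planeDot_eq (v := v) hv
  have h4 : inner ℝ u v ^ 2 = (‖u‖ * ‖v‖) ^ 2 := by
    rw [mul_pow, ← real_inner_self_eq_norm_sq, ← real_inner_self_eq_norm_sq, ← h1, ← h2, ← h3]
    simp only [planeDet, planeDot] at *
    linear_combination (-(inner ℝ a u * inner ℝ b v - inner ℝ b u * inner ℝ a v)) * hdet
  have h5 : inner ℝ u v = ‖u‖ * ‖v‖ :=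
    (sq_eq_sq₀ hdot (mul_nonneg (norm_nonneg _) (norm_nonneg _))).1 h4
  rw [sameRay_iff_norm_smul_eq]
  exact (inner_eq_norm_mul_iff_real.1 h5).symm

theorem IsFrame.planeOpposite_iff (h : IsFrame p a b) {u v : E3} (hu : inner ℝ p u = 0)
    (hv : inner ℝ p v = 0) (hu0 : u ≠ 0) (hv0 : v ≠ 0) :
    PlaneOpposite (inner ℝ a u, inner ℝ b u) (inner ℝ a v, inner ℝ b v) ↔
      SameRay ℝ v (-u) := by
  constructor
  · rintro ⟨h1, h2⟩
    rw [h.planeDot_eq hu] at h2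
    refine h.sameRay hv (by rw [inner_neg_right, hu, neg_zero]) ?_ ?_
    · rw [planeDet_swap, inner_neg_right, inner_neg_right]
      simp only [planeDet] at h1 ⊢
      linarith
    · rw [inner_neg_right, real_inner_comm]
      linarith
  · intro hs
    obtain ⟨r₁, r₂, hr₁, hr₂, hr⟩ := hs.exists_pos hv0 (neg_ne_zero.2 hu0)
    have ea : r₁ * inner ℝ a v = - (r₂ * inner ℝ a u) := by
      have := congrArg (fun x => inner ℝ a x) hr
      simpa [inner_smul_right] using this
    have eb : r₁ * inner ℝ b v = - (r₂ * inner ℝ b u) := by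
      have := congrArg (fun x => inner ℝ b x) hr
      simpa [inner_smul_right] using this
    have e : r₁ * inner ℝ u v = - (r₂ * inner ℝ u u) := by
      have := congrArg (fun x => inner ℝ u x) hr
      simpa [inner_smul_right] using this
    refine ⟨?_, ?_⟩
    · have : r₁ * planeDet (inner ℝ a u, inner ℝ b u) (inner ℝ a v, inner ℝ b v) = 0 := by
        simp only [planeDet]
        linear_combination inner ℝ a u * eb - inner ℝ b u * ea
      exact (mul_eq_zero.1 this).resolve_left hr₁.ne'
    · rw [h.planeDot_eq hu]
      have hpos : 0 < inner ℝ u u := real_inner_self_pos.2 hu0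
      by_contra! hc
      nlinarith [mul_pos hr₂ hpos, mul_nonneg hr₁.le hc]

end Frame

namespace SmoothEmbedding

variable {V E : Type*} {G : Multigraph V E} (Γ : SmoothEmbedding G)

/-- The edge-ends at a vertex. -/
def EdgeEnd (v : V) : Type _ := {x : E × Bool // pathEnd (Γ.arc x.1) x.2 = Γ.vert v}

theorem exists_pathEnd_eq_iff (e : E) (v : V) :
    (∃ b, pathEnd (Γ.arc e) b = Γ.vert v) ↔ v ∈ G.ends e := by
  obtain ⟨x, y, hxy, hx, hy⟩ := Γ.arc_ends e
  rw [hxy, Sym2.mem_iff]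
  constructor
  · rintro ⟨b, hb⟩
    cases b
    · exact Or.inl (Γ.vert_injective (hb.symm.trans hx))
    · exact Or.inr (Γ.vert_injective (hb.symm.trans hy))
  · rintro (rfl | rfl)
    · exact ⟨false, hx⟩
    · exact ⟨true, hy⟩

theorem pathEnd_ne (hloop : G.Loopless) (e : E) :
    pathEnd (Γ.arc e) false ≠ pathEnd (Γ.arc e) true := by
  obtain ⟨x, y, hxy, hx, hy⟩ := Γ.arc_ends e
  intro h
  apply hloop e
  rw [hxy, Sym2.mk_isDiag_iff]
  exact Γ.vert_injective (hx.symm.trans (h.trans hy))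

theorem natCard_edgeEnd (hloop : G.Loopless) (v : V) : Nat.card (Γ.EdgeEnd v) = G.degree v := by
  have h0 : {e | G.ends e = s(v, v)} = ∅ := by
    ext e
    simp only [mem_ofPred_eq, mem_empty_iff_false, iff_false]
    intro h
    apply hloop e
    rw [h]
    exact Sym2.mk_isDiag_iff.2 rfl
  rw [Multigraph.degree, h0, ncard_empty, add_zero, ← Nat.card_coe_set_eq]
  refine Nat.card_congr (Equiv.ofBijective
    (fun x : Γ.EdgeEnd v => ⟨x.1.1, (Γ.exists_pathEnd_eq_iff _ v).1 ⟨x.1.2, x.2⟩⟩) ⟨?_, ?_⟩)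
  · rintro ⟨⟨e, b⟩, hb⟩ ⟨⟨e', b'⟩, hb'⟩ h
    obtain rfl : e = e' := congrArg Subtype.val h
    have hne := Γ.pathEnd_ne hloop e
    dsimp only at hb hb'
    cases b <;> cases b'
    · rfl
    · exact absurd (hb.trans hb'.symm) hne
    · exact absurd (hb'.trans hb.symm) hne
    · rfl
  · rintro ⟨e, he⟩
    obtain ⟨b, hb⟩ := (Γ.exists_pathEnd_eq_iff e v).2 he
    exact ⟨⟨(e, b), hb⟩, rfl⟩

theorem exists_vertexModel [Finite E] (hloop : G.Loopless) (v : V) (hdeg : G.degree v ≤ 4)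
    (s : E → Bool → ℝ) (hs : ∀ e b, s e b = 1 ∨ s e b = -1) :
    ∃ q : E3 → ℝ, ContDiff ℝ ∞ q ∧ q (Γ.vert v) = 0 ∧
      (∀ᶠ y in 𝓝[≠] (Γ.vert v : E3), ‖y‖ = 1 → ¬ IsSphereCritical q y) ∧
      (IsSphereCritical q (Γ.vert v) → IsSphereNondegenerate q (Γ.vert v)) ∧
      ∀ e b, pathEnd (Γ.arc e) b = Γ.vert v →
        ∀ᶠ t in 𝓝[>] (0 : ℝ), 0 < s e b * deriv (q ∘ endPath (Γ.arc e) b) t := by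
  classical
  have hnorm : ‖(Γ.vert v : E3)‖ = 1 := by simp
  obtain ⟨a, b, hfr⟩ := exists_isFrame hnorm
  set p : E3 := (Γ.vert v : E3) with hp
  have : Finite (Γ.EdgeEnd v) := Subtype.finite
  have : Fintype (Γ.EdgeEnd v) := Fintype.ofFinite _
  let dir : Γ.EdgeEnd v → E3 := fun i => pathEndDir (Γ.arc i.1.1) i.1.2
  have hdir : ∀ i, inner ℝ p (dir i) = 0 := fun i => by
    have := inner_pathEnd_pathEndDir (Γ.arc_smooth i.1.1) i.1.2
    rwa [i.2] at this
  have hdir0 : ∀ i, dir i ≠ 0 := fun i => pathEndDir_ne_zero (Γ.arc_regular i.1.1) i.1.2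
  have hcard : Fintype.card (Γ.EdgeEnd v) = G.degree v := by
    rw [← Nat.card_eq_fintype_card, Γ.natCard_edgeEnd hloop]
  have hends : ∀ d, d ∈ endDirs Γ.arc (Γ.vert v) ↔ ∃ i, dir i = d := by
    intro d
    constructor
    · rintro ⟨e, b, h1, h2⟩
      exact ⟨⟨(e, b), h1⟩, h2⟩
    · rintro ⟨i, hi⟩
      exact ⟨i.1.1, i.1.2, i.2, hi⟩
  let d : Γ.EdgeEnd v → ℝ × ℝ := fun i => (inner ℝ a (dir i), inner ℝ b (dir i))
  let D : (ℝ → ℝ) → ℝ → ℝ := fun g => derivWithin g (Icc 0 1)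
  let X : E3 → Γ.EdgeEnd v → ℝ → ℝ := fun c i t => inner ℝ c (endPath (Γ.arc i.1.1) i.1.2 t)
  let k : Γ.EdgeEnd v → ℝ × ℝ := fun i => (D (D (X a i)) 0, D (D (X b i)) 0)
  have hopp : ∀ i j, PlaneOpposite (d i) (d j) ↔ SameRay ℝ (dir j) (-dir i) := fun i j =>
    hfr.planeOpposite_iff (hdir i) (hdir j) (hdir0 i) (hdir0 j)
  obtain ⟨w, c, hmodel, hnd⟩ := exists_isPlaneModel (d := d) (s := fun i => s i.1.1 i.1.2)
    (fun i h0 => by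
      have h1 := hfr.planeDot_eq (v := dir i) (hdir i)
      have h2 : planeDot (d i) (d i) = inner ℝ (dir i) (dir i) := h1
      rw [h0] at h2
      exact (real_inner_self_pos.2 (hdir0 i)).ne (by simpa [planeDot] using h2))
    (fun i j hij => by
      by_contra! hcon
      obtain ⟨h1, h2⟩ := hcon
      have h3 : planeDot (d i) (d j) = inner ℝ (dir i) (dir j) := hfr.planeDot_eq (hdir i)
      refine Γ.dir_distinct i.1.1 i.1.2 j.1.1 j.1.2 (fun h => hij (Subtype.ext h))
        (i.2.trans j.2.symm) (hfr.sameRay (hdir i) (hdir j) h1 (h3 ▸ h2)))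
    (by omega)
    (fun h4 w hw => by
      have hvec : ∀ u, inner ℝ p u = 0 → inner ℝ (w.1 • a + w.2 • b) u =
          planeDot w (inner ℝ a u, inner ℝ b u) := by
        intro u _
        rw [inner_add_left, real_inner_smul_left, real_inner_smul_left]
        rfl
      obtain ⟨x, hx, hx'⟩ := Γ.dir_balanced v (by omega) (w.1 • a + w.2 • b)
        (by rw [inner_add_right, inner_smul_right, inner_smul_right, real_inner_comm, hfr.ap,
              real_inner_comm, hfr.bp]; simp)
        (fun h0 => hw (by
          have ha : inner ℝ a (w.1 • a + w.2 • b) = w.1 := by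
            rw [inner_add_right, inner_smul_right, inner_smul_right, hfr.aa, hfr.ab]; ring
          have hb : inner ℝ b (w.1 • a + w.2 • b) = w.2 := by
            rw [inner_add_right, inner_smul_right, inner_smul_right, hfr.bb, real_inner_comm,
              hfr.ab]; ring
          rw [h0, inner_zero_right] at ha hb
          exact Prod.ext ha.symm hb.symm))
      obtain ⟨i, rfl⟩ := (hends x).1 hx
      exact ⟨i, by rwa [hvec _ (hdir i)] at hx'⟩)
    (fun h4 => by
      rintro ⟨i, j, hij⟩ l
      obtain ⟨x, hx, hx'⟩ := Γ.dir_opposite v (by omega) ⟨dir i, (hends _).2 ⟨i, rfl⟩, dir j,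
        (hends _).2 ⟨j, rfl⟩, (hopp i j).1 hij⟩ (dir l) ((hends _).2 ⟨l, rfl⟩)
      obtain ⟨m, rfl⟩ := (hends x).1 hx
      exact ⟨m, (hopp l m).2 hx'⟩)
    (fun i => hs _ _) k
  obtain ⟨hiso, hcrit⟩ := frameQuadratic_isolated hfr hnd
  refine ⟨frameQuadratic a b w c, contDiff_frameQuadratic a b w c, frameQuadratic_self hfr, hiso,
    hcrit, fun e β hβ => ?_⟩
  let i : Γ.EdgeEnd v := ⟨(e, β), hβ⟩
  have hη := contDiffOn_endPath (Γ.arc_smooth e) β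
  have hηd := (hη.differentiableOn (by simp) 0 (by simp)).hasDerivWithinAt
  rw [derivWithin_endPath (Γ.arc_smooth e)] at hηd
  have hu : UniqueDiffOn ℝ (Icc (0 : ℝ) 1) := uniqueDiffOn_Icc zero_lt_one
  have hXs : ∀ c, ContDiffOn ℝ ∞ (X c i) (Icc 0 1) := fun c => contDiffOn_const.inner ℝ hη
  have hXd : ∀ c, D (X c i) 0 = inner ℝ c (dir i) := fun c => by
    have := ((innerSL ℝ c).hasFDerivAt.comp_hasDerivWithinAt 0 hηd).derivWithin (hu 0 (by simp))
    exact this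
  have hX0 : ∀ c, inner ℝ c p = 0 → X c i 0 = 0 := fun c hc => by
    have : endPath (Γ.arc e) β 0 = p := by rw [endPath_zero, hβ]
    change inner ℝ c (endPath (Γ.arc e) β 0) = 0
    rw [this, hc]
  obtain ⟨h1, h2⟩ := derivWithin_quadratic (hXs a) (hXs b) (hX0 a hfr.ap) (hX0 b hfr.bp) w c
  apply eventually_deriv_pos_of_second_order
  · exact (contDiff_frameQuadratic a b w c).comp_contDiffOn hη
  · rcases hmodel i with h3 | ⟨h3, h4⟩
    · left
      refine h3.trans_eq ?_
      refine congrArg (s e β * ·) (Eq.symm (Eq.trans h1 ?_))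
      change planeDot w (D (X a i) 0, D (X b i) 0) = _
      rw [hXd, hXd]
    · right
      refine ⟨Eq.trans h1 ?_, h4.trans_eq ?_⟩
      · change planeDot w (D (X a i) 0, D (X b i) 0) = _
        rw [hXd, hXd]
        exact h3
      · refine congrArg (s e β * ·) (Eq.symm (Eq.trans h2 ?_))
        change planeDot w (k i) + 2 * planeForm c (D (X a i) 0, D (X b i) 0) = _
        rw [hXd, hXd]

end SmoothEmbedding

/-! ### Extension of functions from an embedded graph -/

/-- A smooth function of the parameter of a regular curve is locally the restriction of a smooth
function of the ambient space. -/
theorem exists_local_extension {γ : ℝ → E3} {H : ℝ → ℝ} {s : Set ℝ} (hs : IsOpen s)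
    (hγ : ContDiffOn ℝ ∞ γ s) (hH : ContDiffOn ℝ ∞ H s) {t₀ : ℝ} (ht₀ : t₀ ∈ s)
    (hreg : deriv γ t₀ ≠ 0) :
    ∃ U ∈ 𝓝 (γ t₀), ∃ g : E3 → ℝ, ContDiffOn ℝ ∞ g U ∧ ∀ᶠ t in 𝓝 t₀, g (γ t) = H t := by
  let l : ℝ → ℝ := fun t => inner ℝ (deriv γ t₀) (γ t)
  have hl : ContDiffOn ℝ ∞ l s := contDiffOn_const.inner ℝ hγ
  have hlat : ∀ t ∈ s, ContDiffAt ℝ ∞ l t := fun t ht => hl.contDiffAt (hs.mem_nhds ht)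
  have hγd : HasDerivAt γ (deriv γ t₀) t₀ :=
    ((hγ.contDiffAt (hs.mem_nhds ht₀)).differentiableAt (by simp)).hasDerivAt
  have hld : HasDerivAt l (inner ℝ (deriv γ t₀) (deriv γ t₀)) t₀ :=
    (innerSL ℝ (deriv γ t₀)).hasFDerivAt.comp_hasDerivAt t₀ hγd
  have hne : inner ℝ (deriv γ t₀) (deriv γ t₀) ≠ 0 := (real_inner_self_pos.2 hreg).ne'
  let φ := (hlat t₀ ht₀).toOpenPartialHomeomorph l (hld.hasFDerivAt_equiv hne) (by simp)
  have hφ : (φ : ℝ → ℝ) = l := rfl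
  have hsrc : t₀ ∈ φ.source :=
    (hlat t₀ ht₀).mem_toOpenPartialHomeomorph_source (hld.hasFDerivAt_equiv hne) (by simp)
  have htgt : l t₀ ∈ φ.target := φ.map_source hsrc
  have hinv : φ.symm (l t₀) = t₀ := φ.left_inv hsrc
  have hcont : ContinuousAt φ.symm (l t₀) := φ.continuousAt_symm htgt
  have hev1 : ∀ᶠ t in 𝓝 t₀, t ∈ s ∧ deriv l t ≠ 0 := by
    refine (hs.eventually_mem ht₀).and (ContinuousAt.eventually_ne ?_ (hld.deriv ▸ hne))
    exact (hl.continuousOn_deriv_of_isOpen hs (by simp)).continuousAt (hs.mem_nhds ht₀)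
  have hev2 : ∀ᶠ y in 𝓝 (l t₀), y ∈ φ.target ∧ φ.symm y ∈ s ∧ deriv l (φ.symm y) ≠ 0 := by
    rw [← hinv] at hev1
    exact (φ.open_target.eventually_mem htgt).and (hcont.eventually hev1)
  have hin : Continuous fun x : E3 => inner ℝ (deriv γ t₀) x :=
    (innerSL ℝ (deriv γ t₀)).continuous
  have hev3 := (hin.continuousAt (x := γ t₀)).eventually hev2
  refine ⟨_, hev3, fun x => H (φ.symm (inner ℝ (deriv γ t₀) x)), ?_, ?_⟩
  · intro x hx
    obtain ⟨h1, h2, h3⟩ := hx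
    have k1 : ContDiffAt ℝ ∞ φ.symm (inner ℝ (deriv γ t₀) x) := by
      refine φ.contDiffAt_symm_deriv h3 h1 ?_ (hlat _ h2)
      exact ((hlat _ h2).differentiableAt (by simp)).hasDerivAt
    have k2 : ContDiffAt ℝ ∞ H (φ.symm (inner ℝ (deriv γ t₀) x)) :=
      hH.contDiffAt (hs.mem_nhds h2)
    have k3 : ContDiffAt ℝ ∞ (fun x : E3 => inner ℝ (deriv γ t₀) x) x :=
      (innerSL ℝ (deriv γ t₀)).contDiff.contDiffAt
    exact (k2.comp x (k1.comp x k3)).contDiffWithinAt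
  · filter_upwards [φ.open_source.mem_nhds hsrc] with t ht
    have : φ.symm (l t) = t := φ.left_inv ht
    exact congrArg H this

namespace SmoothEmbedding

variable {V E : Type*} {G : Multigraph V E} (Γ : SmoothEmbedding G)

theorem continuousOn_arc (e : E) : ContinuousOn (fun t => (Γ.arc e t : E3)) (Icc 0 1) :=
  (Γ.arc_smooth e).continuousOn

theorem arc_injOn_Icc (hloop : G.Loopless) (e : E) : InjOn (Γ.arc e) (Icc 0 1) := by
  obtain ⟨x, y, -, hx, hy⟩ := Γ.arc_ends e
  have hne : Γ.arc e 0 ≠ Γ.arc e 1 := Γ.pathEnd_ne hloop e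
  have hcases : ∀ t ∈ Icc (0 : ℝ) 1, t = 0 ∨ t = 1 ∨ t ∈ Ioo (0 : ℝ) 1 := by
    intro t ht
    rcases ht.1.eq_or_lt with h | h
    · exact Or.inl h.symm
    rcases ht.2.eq_or_lt with h' | h'
    · exact Or.inr (Or.inl h')
    · exact Or.inr (Or.inr ⟨h, h'⟩)
  intro t ht t' ht' h
  rcases hcases t ht with rfl | rfl | hti <;> rcases hcases t' ht' with rfl | rfl | hti'
  · rfl
  · exact absurd h hne
  · exact absurd (h.symm.trans hx) (Γ.arc_ne_vert e t' hti' x)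
  · exact absurd h.symm hne
  · rfl
  · exact absurd (h.symm.trans hy) (Γ.arc_ne_vert e t' hti' y)
  · exact absurd (h.trans hx) (Γ.arc_ne_vert e t hti x)
  · exact absurd (h.trans hy) (Γ.arc_ne_vert e t hti y)
  · exact Γ.arc_injOn e hti hti' h

theorem eventually_notMem_arc_image (e : E) {K : Set ℝ} (hK : IsCompact K) (hK1 : K ⊆ Icc 0 1)
    {x : S2} (hx : ∀ t ∈ K, Γ.arc e t ≠ x) :
    ∀ᶠ y in 𝓝 (x : E3), ∀ t ∈ K, (Γ.arc e t : E3) ≠ y := by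
  have hc : IsClosed ((fun t => (Γ.arc e t : E3)) '' K) :=
    (hK.image_of_continuousOn ((Γ.continuousOn_arc e).mono hK1)).isClosed
  have hmem : (x : E3) ∉ (fun t => (Γ.arc e t : E3)) '' K := by
    rintro ⟨t, ht, h⟩
    exact hx t ht (Subtype.ext h)
  filter_upwards [hc.isOpen_compl.mem_nhds hmem] with y hy t ht h
  exact hy ⟨t, ht, h⟩

theorem deriv_arc_ne_zero (e : E) {t : ℝ} (ht : t ∈ Ioo (0 : ℝ) 1) :
    deriv (fun t => (Γ.arc e t : E3)) t ≠ 0 := by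
  have := Γ.arc_regular e t (Ioo_subset_Icc_self ht)
  rwa [pathVelocity, derivWithin_of_mem_nhds (Icc_mem_nhds ht.1 ht.2)] at this

/-- Smooth functions on the edges extend locally from every point of the ambient space which is
not a vertex. -/
theorem exists_local_extension_arcs [Finite E] (hloop : G.Loopless) {H : E → ℝ → ℝ}
    (hH : ∀ e, ContDiffOn ℝ ∞ (H e) (Ioo 0 1)) (x : E3) (hx : ∀ v, (Γ.vert v : E3) ≠ x) :
    ∃ U ∈ 𝓝 x, ∃ g : E3 → ℝ, ContDiffOn ℝ ∞ g U ∧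
      ∀ y ∈ U, ∀ e, ∀ t ∈ Ioo (0 : ℝ) 1, (Γ.arc e t : E3) = y → g y = H e t := by
  have hoff : ∀ e, (∀ t ∈ Ioo (0 : ℝ) 1, (Γ.arc e t : E3) ≠ x) →
      ∀ᶠ y in 𝓝 x, ∀ t ∈ Ioo (0 : ℝ) 1, (Γ.arc e t : E3) ≠ y := by
    intro e he
    have hc : IsClosed ((fun t => (Γ.arc e t : E3)) '' Icc 0 1) :=
      (isCompact_Icc.image_of_continuousOn (Γ.continuousOn_arc e)).isClosed
    have hmem : x ∉ (fun t => (Γ.arc e t : E3)) '' Icc 0 1 := by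
      rintro ⟨t, ht, h⟩
      obtain ⟨u, v, -, hu, hv⟩ := Γ.arc_ends e
      rcases ht.1.eq_or_lt with h0 | h0
      · subst h0; exact hx u (hu ▸ h)
      rcases ht.2.eq_or_lt with h1 | h1
      · subst h1; exact hx v (hv ▸ h)
      · exact he t ⟨h0, h1⟩ h
    filter_upwards [hc.isOpen_compl.mem_nhds hmem] with y hy t ht h
    exact hy ⟨t, Ioo_subset_Icc_self ht, h⟩
  by_cases hx' : ∃ e, ∃ t ∈ Ioo (0 : ℝ) 1, (Γ.arc e t : E3) = x
  · obtain ⟨e, t₀, ht₀, rfl⟩ := hx'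
    obtain ⟨U, hU, g, hg, hgH⟩ := exists_local_extension isOpen_Ioo
      ((Γ.arc_smooth e).mono Ioo_subset_Icc_self) (hH e) ht₀ (Γ.deriv_arc_ne_zero e ht₀)
    obtain ⟨ε, hε, hball⟩ := Metric.eventually_nhds_iff_ball.1 hgH
    have h1 : ∀ᶠ y in 𝓝 (Γ.arc e t₀ : E3), ∀ t ∈ Icc (0 : ℝ) 1 \ Metric.ball t₀ ε,
        (Γ.arc e t : E3) ≠ y := by
      refine Γ.eventually_notMem_arc_image e (isCompact_Icc.diff Metric.isOpen_ball)
        sdiff_subset fun t ht h => ?_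
      have := Γ.arc_injOn_Icc hloop e ht.1 (Ioo_subset_Icc_self ht₀) h
      exact ht.2 (this ▸ Metric.mem_ball_self hε)
    have h2 : ∀ᶠ y in 𝓝 (Γ.arc e t₀ : E3), ∀ e', e' ≠ e → ∀ t ∈ Ioo (0 : ℝ) 1,
        (Γ.arc e' t : E3) ≠ y := by
      refine Filter.eventually_all.2 fun e' => ?_
      by_cases he : e' = e
      · exact Eventually.of_forall fun y h => absurd he h
      · filter_upwards [hoff e' fun t ht h => Γ.arc_ne_arc e' e he t ht t₀ ht₀ (Subtype.ext h)]
          with y hy _ using hy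
    refine ⟨U ∩ {y | (∀ t ∈ Icc (0 : ℝ) 1 \ Metric.ball t₀ ε, (Γ.arc e t : E3) ≠ y) ∧
      ∀ e', e' ≠ e → ∀ t ∈ Ioo (0 : ℝ) 1, (Γ.arc e' t : E3) ≠ y},
      inter_mem hU (h1.and h2), g, hg.mono inter_subset_left, ?_⟩
    rintro y ⟨-, hy1, hy2⟩ e' t ht rfl
    by_cases he : e' = e
    · subst he
      by_cases htb : t ∈ Metric.ball t₀ ε
      · exact hball t htb
      · exact absurd rfl (hy1 t ⟨Ioo_subset_Icc_self ht, htb⟩)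
    · exact absurd rfl (hy2 e' he t ht)
  · push Not at hx'
    refine ⟨_, Filter.eventually_all.2 fun e => hoff e (hx' e), fun _ => 0, contDiffOn_const, ?_⟩
    intro y hy e t ht h
    exact absurd h (hy e t ht)

/-- A smooth function with prescribed germs at the vertices and prescribed values on the edges. -/
theorem exists_extension [Finite V] [Finite E] (hloop : G.Loopless) {H : E → ℝ → ℝ}
    (hH : ∀ e, ContDiffOn ℝ ∞ (H e) (Ioo 0 1)) {Q : V → E3 → ℝ} (hQ : ∀ v, ContDiff ℝ ∞ (Q v))
    (hHQ : ∀ v, ∀ᶠ x in 𝓝 (Γ.vert v : E3), ∀ e, ∀ t ∈ Ioo (0 : ℝ) 1,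
      (Γ.arc e t : E3) = x → H e t = Q v x) :
    ∃ F : E3 → ℝ, ContDiff ℝ ∞ F ∧ (∀ v, F =ᶠ[𝓝 (Γ.vert v : E3)] Q v) ∧
      ∀ e, ∀ t ∈ Ioo (0 : ℝ) 1, F (Γ.arc e t) = H e t := by
  have hr1 : ∀ v, ∀ᶠ r in 𝓝[>] (0 : ℝ), ∀ x ∈ Metric.ball (Γ.vert v : E3) (2 * r), ∀ e,
      ∀ t ∈ Ioo (0 : ℝ) 1, (Γ.arc e t : E3) = x → H e t = Q v x := by
    intro v
    obtain ⟨ε, hε, hb⟩ := Metric.eventually_nhds_iff_ball.1 (hHQ v)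
    filter_upwards [Ioo_mem_nhdsGT (show (0 : ℝ) < ε / 2 by linarith)] with r hr x hx
    exact hb x (Metric.ball_subset_ball (by linarith [hr.2]) hx)
  have hr2 : ∀ v v', v ≠ v' → ∀ᶠ r in 𝓝[>] (0 : ℝ),
      3 * r < dist (Γ.vert v : E3) (Γ.vert v') := by
    intro v v' hv
    have hpos : 0 < dist (Γ.vert v : E3) (Γ.vert v') :=
      dist_pos.2 fun h => hv (Γ.vert_injective (Subtype.ext h))
    filter_upwards [Ioo_mem_nhdsGT (show (0 : ℝ) < dist (Γ.vert v : E3) (Γ.vert v') / 3 by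
      linarith)] with r hr
    linarith [hr.2]
  have hr2' : ∀ᶠ r in 𝓝[>] (0 : ℝ), ∀ v v', v ≠ v' →
      3 * r < dist (Γ.vert v : E3) (Γ.vert v') :=
    Filter.eventually_all.2 fun v => Filter.eventually_all.2 fun v' => by
      by_cases h : v = v'
      · exact Eventually.of_forall fun r h' => absurd h h'
      · filter_upwards [hr2 v v' h] with r hr _ using hr
  obtain ⟨r, ⟨hrH, hrd⟩, hr0⟩ :=
    (((Filter.eventually_all.2 hr1).and hr2').and self_mem_nhdsWithin).exists
  let T : E3 → Set ℝ := fun x => {y | (∀ v, x ∈ Metric.closedBall (Γ.vert v : E3) r → y = Q v x) ∧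
    ∀ e, ∀ t ∈ Ioo (0 : ℝ) 1, (Γ.arc e t : E3) = x → y = H e t}
  have hT : ∀ x, Convex ℝ (T x) := by
    rintro x y ⟨hy1, hy2⟩ z ⟨hz1, hz2⟩ α β - - hαβ
    refine ⟨fun v hv => ?_, fun e t ht h => ?_⟩
    · rw [hy1 v hv, hz1 v hv, ← add_smul, hαβ, one_smul]
    · rw [hy2 e t ht h, hz2 e t ht h, ← add_smul, hαβ, one_smul]
  obtain ⟨F, hF⟩ := exists_contMDiffMap_forall_mem_convex_of_local (n := (⊤ : ℕ∞)) 𝓘(ℝ, E3) hT (by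
    intro x
    by_cases hx : ∃ v, x ∈ Metric.closedBall (Γ.vert v : E3) r
    · obtain ⟨v, hv⟩ := hx
      rw [Metric.mem_closedBall] at hv
      refine ⟨Metric.ball (Γ.vert v : E3) (2 * r), Metric.isOpen_ball.mem_nhds ?_, Q v,
        (hQ v).contMDiff.contMDiffOn, ?_⟩
      · rw [Metric.mem_ball]; linarith
      · intro y hy
        refine ⟨fun v' hv' => ?_, fun e t ht h => (hrH v y hy e t ht h).symm⟩
        by_cases hvv : v = v'
        · rw [hvv]
        · exfalso
          have h1 := hrd v v' hvv
          have h2 := dist_triangle_left (Γ.vert v : E3) (Γ.vert v') y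
          rw [Metric.mem_ball] at hy
          rw [Metric.mem_closedBall] at hv'
          linarith
    · push Not at hx
      obtain ⟨U, hU, g, hg, hgH⟩ := Γ.exists_local_extension_arcs hloop hH x (fun v h =>
        hx v (h ▸ Metric.mem_closedBall_self hr0.le))
      have hoff : ∀ᶠ y in 𝓝 x, ∀ v, y ∉ Metric.closedBall (Γ.vert v : E3) r :=
        Filter.eventually_all.2 fun v =>
          Metric.isClosed_closedBall.isOpen_compl.mem_nhds (hx v)
      refine ⟨_, inter_mem hU hoff, g, (hg.mono inter_subset_left).contMDiffOn, ?_⟩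
      rintro y ⟨hy1, hy2⟩
      exact ⟨fun v hv => absurd hv (hy2 v), fun e t ht h => hgH y hy1 e t ht h⟩)
  refine ⟨F, F.contMDiff.contDiff, fun v => ?_, fun e t ht => (hF _).2 e t ht rfl⟩
  filter_upwards [Metric.closedBall_mem_nhds (Γ.vert v : E3) hr0] with x hx
  exact (hF x).1 v hx

end SmoothEmbedding

/-! ### Functions which are monotone on the edges -/

namespace SmoothEmbedding

variable {V E : Type*} {G : Multigraph V E} (Γ : SmoothEmbedding G)

/-- A smooth function with the values `c` at the vertices which is increasing or decreasing on
each edge, according to the sign `σ`. -/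
structure IsHeight (c : V → ℝ) (σ : E → ℝ) (F : E3 → ℝ) : Prop where
  smooth : ContDiff ℝ ∞ F
  vert : ∀ v, F (Γ.vert v) = c v
  deriv_pos : ∀ e, ∀ t ∈ Ioo (0 : ℝ) 1, 0 < σ e * deriv (fun t => F (Γ.arc e t)) t

theorem tendsto_one_sub_nhdsLT : Tendsto (fun t : ℝ => 1 - t) (𝓝[<] 1) (𝓝[>] 0) := by
  refine tendsto_nhdsWithin_iff.2 ⟨?_, ?_⟩
  · have : Tendsto (fun t : ℝ => 1 - t) (𝓝 1) (𝓝 (1 - 1)) :=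
      (continuous_const.sub continuous_id).tendsto 1
    rw [sub_self] at this
    exact this.mono_left nhdsWithin_le_nhds
  · filter_upwards [self_mem_nhdsWithin] with t ht
    rw [mem_Iio] at ht
    rw [mem_Ioi]
    linarith

theorem exists_isHeight [Finite V] [Finite E] (hdeg : ∀ v, G.degree v ≤ 4) (hloop : G.Loopless)
    (c : V → ℝ) (hc : Function.Injective c) :
    ∃ σ F, (∀ e, σ e = 1 ∨ σ e = -1) ∧ Γ.IsHeight c σ F ∧
      (∀ v, ∀ᶠ y in 𝓝[≠] (Γ.vert v : E3), ‖y‖ = 1 → ¬ IsSphereCritical F y) ∧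
      ∀ v, IsSphereCritical F (Γ.vert v) → IsSphereNondegenerate F (Γ.vert v) := by
  classical
  choose x y hxy hx hy using Γ.arc_ends
  have hne : ∀ e, x e ≠ y e := fun e h => Γ.pathEnd_ne hloop e (by
    simp only [pathEnd]; rw [hx, hy, h])
  let σ : E → ℝ := fun e => if c (x e) < c (y e) then 1 else -1
  have hσ : ∀ e, σ e = 1 ∨ σ e = -1 := fun e => by
    by_cases h : c (x e) < c (y e) <;> simp [σ, h]
  have hσc : ∀ e, 0 < σ e * (c (y e) - c (x e)) := fun e => by
    by_cases h : c (x e) < c (y e)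
    · simp only [σ, h, if_true]; linarith
    · have := lt_of_le_of_ne (not_lt.1 h) fun h' => hne e (hc h').symm
      simp only [σ, h, if_false]; linarith
  let s : E → Bool → ℝ := fun e b => if b then - σ e else σ e
  have hs : ∀ e b, s e b = 1 ∨ s e b = -1 := fun e b => by
    cases b <;> rcases hσ e with h | h <;> simp [s, h]
  choose q hq hq0 hiso hcrit hmono using fun v => Γ.exists_vertexModel hloop v (hdeg v) s hs
  let Q : V → E3 → ℝ := fun v z => c v + q v z
  have hQ : ∀ v, ContDiff ℝ ∞ (Q v) := fun v => contDiff_const.add (hq v)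
  have hglue : ∀ e, ∃ H : ℝ → ℝ, ContDiffOn ℝ ∞ H (Ioo 0 1) ∧
      (∀ᶠ t in 𝓝[>] (0 : ℝ), H t = Q (x e) (Γ.arc e t)) ∧
      (∀ᶠ t in 𝓝[<] (1 : ℝ), H t = Q (y e) (Γ.arc e t)) ∧
      ∀ t ∈ Ioo (0 : ℝ) 1, 0 < σ e * deriv H t := by
    intro e
    refine exists_monotone_glue (g₀ := fun t => Q (x e) (Γ.arc e t))
      (g₁ := fun t => Q (y e) (Γ.arc e t)) (hσ e)
      ((hQ _).comp_contDiffOn (Γ.arc_smooth e)) ((hQ _).comp_contDiffOn (Γ.arc_smooth e)) ?_ ?_ ?_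
    · simp only [Q]
      rw [hx, hy, hq0, hq0, add_zero, add_zero]
      exact hσc e
    · filter_upwards [hmono (x e) e false (hx e)] with t ht
      simp only [Q]
      rw [deriv_const_add]
      exact ht
    · filter_upwards [tendsto_one_sub_nhdsLT.eventually (hmono (y e) e true (hy e))] with t ht
      have h1 : deriv (q (y e) ∘ endPath (Γ.arc e) true) (1 - t)
          = - deriv (fun t => q (y e) (Γ.arc e t)) (1 - (1 - t)) :=
        deriv_comp_const_sub (fun t => q (y e) (Γ.arc e t)) 1 (1 - t)
      rw [h1, sub_sub_cancel] at ht
      simp only [s, if_true] at ht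
      simp only [Q]
      rw [deriv_const_add]
      linarith
  choose H hH hH0 hH1 hHd using hglue
  have hHQ : ∀ v, ∀ᶠ z in 𝓝 (Γ.vert v : E3), ∀ e, ∀ t ∈ Ioo (0 : ℝ) 1,
      (Γ.arc e t : E3) = z → H e t = Q v z := by
    intro v
    refine Filter.eventually_all.2 fun e => ?_
    have hinj := Γ.arc_injOn_Icc hloop e
    have hoff : ∀ t ∈ Ioo (0 : ℝ) 1, ∀ v, Γ.arc e t ≠ Γ.vert v := Γ.arc_ne_vert e
    by_cases hvx : v = x e
    · subst hvx
      obtain ⟨a, ha, ha'⟩ := mem_nhdsGT_iff_exists_Ioo_subset.1 (hH0 e)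
      rw [mem_Ioi] at ha
      have := Γ.eventually_notMem_arc_image e (isCompact_Icc (a := a) (b := 1))
        (Icc_subset_Icc_left ha.le) (x := Γ.vert (x e)) fun t ht h => by
          have := hinj (Icc_subset_Icc_left ha.le ht) (left_mem_Icc.2 zero_le_one)
            (h.trans (hx e).symm)
          linarith [ht.1]
      filter_upwards [this] with z hz t ht hzt
      rcases lt_or_ge t a with h | h
      · rw [← hzt]; exact ha' ⟨ht.1, h⟩
      · exact absurd hzt (hz t ⟨h, ht.2.le⟩)
    by_cases hvy : v = y e
    · subst hvy
      obtain ⟨b, hb, hb'⟩ := mem_nhdsLT_iff_exists_Ioo_subset.1 (hH1 e)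
      rw [mem_Iio] at hb
      have := Γ.eventually_notMem_arc_image e (isCompact_Icc (a := 0) (b := b))
        (Icc_subset_Icc_right hb.le) (x := Γ.vert (y e)) fun t ht h => by
          have := hinj (Icc_subset_Icc_right hb.le ht) (right_mem_Icc.2 zero_le_one)
            (h.trans (hy e).symm)
          linarith [ht.2]
      filter_upwards [this] with z hz t ht hzt
      rcases lt_or_ge b t with h | h
      · rw [← hzt]; exact hb' ⟨h, ht.2⟩
      · exact absurd hzt (hz t ⟨ht.1.le, h⟩)
    have := Γ.eventually_notMem_arc_image e (isCompact_Icc (a := 0) (b := 1)) subset_rfl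
      (x := Γ.vert v) fun t ht h => by
        rcases ht.1.eq_or_lt with h0 | h0
        · subst h0; exact hvx (Γ.vert_injective (h.symm.trans (hx e)))
        rcases ht.2.eq_or_lt with h1 | h1
        · subst h1; exact hvy (Γ.vert_injective (h.symm.trans (hy e)))
        · exact hoff t ⟨h0, h1⟩ v h
    filter_upwards [this] with z hz t ht hzt
    exact absurd hzt (hz t (Ioo_subset_Icc_self ht))
  obtain ⟨F, hF, hFQ, hFH⟩ := Γ.exists_extension hloop hH hQ hHQ
  have hQcomm : ∀ v, Q v = fun z => q v z + c v := fun v => funext fun z => add_comm _ _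
  refine ⟨σ, F, hσ, ⟨hF, fun v => ?_, fun e t ht => ?_⟩, fun v => ?_, fun v hv => ?_⟩
  · rw [(hFQ v).eq_of_nhds]
    simp only [Q]
    rw [hq0, add_zero]
  · have : (fun t => F (Γ.arc e t)) =ᶠ[𝓝 t] H e := by
      filter_upwards [isOpen_Ioo.mem_nhds ht] with t' ht' using hFH e t' ht'
    rw [this.deriv_eq]
    exact hHd e t ht
  · filter_upwards [hiso v, ((hFQ v).eventuallyEq_nhds).filter_mono nhdsWithin_le_nhds]
      with z hz hz' hz1 hz2
    rw [hz'.isSphereCritical_iff, hQcomm, isSphereCritical_add_const] at hz2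
    exact hz hz1 hz2
  · rw [(hFQ v).isSphereCritical_iff, hQcomm, isSphereCritical_add_const] at hv
    rw [(hFQ v).isSphereNondegenerate_iff, hQcomm, isSphereNondegenerate_add_const]
    exact hcrit v hv

section Perturbation

variable {Γ} {c : V → ℝ} {σ : E → ℝ} {F : E3 → ℝ}

theorem hasDerivAt_comp_arc (hF : ContDiff ℝ ∞ F) (e : E) {t : ℝ} (ht : t ∈ Ioo (0 : ℝ) 1) :
    HasDerivAt (fun t => F (Γ.arc e t))
      (fderiv ℝ F (Γ.arc e t) (deriv (fun t => (Γ.arc e t : E3)) t)) t := by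
  have h1 : HasDerivAt (fun t => (Γ.arc e t : E3)) (deriv (fun t => (Γ.arc e t : E3)) t) t :=
    (((Γ.arc_smooth e).contDiffAt (Icc_mem_nhds ht.1 ht.2)).differentiableAt
      (by simp)).hasDerivAt
  exact ((hF.differentiable (by simp) (Γ.arc e t)).hasFDerivAt).comp_hasDerivAt t h1

/-- Small perturbations away from the vertices preserve the monotonicity on the edges. -/
theorem IsHeight.eventually_add [Finite E] (hF : Γ.IsHeight c σ F) {A : Type*}
    [TopologicalSpace A] {P : A → E3 → ℝ} (hP : ∀ a, ContDiff ℝ ∞ (P a))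
    (hP' : Continuous fun z : A × E3 => fderiv ℝ (P z.1) z.2) {a₀ : A} (ha₀ : ∀ x, P a₀ x = 0)
    {W : Set E3} (hW : IsOpen W) (hvW : ∀ v, (Γ.vert v : E3) ∈ W) (hPW : ∀ a, ∀ x ∈ W, P a x = 0) :
    ∀ᶠ a in 𝓝 a₀, Γ.IsHeight c σ (fun x => F x + P a x) := by
  let γ : E → ℝ → E3 := fun e t => (Γ.arc e t : E3)
  have hcont : ∀ e, ∀ t ∈ Ioo (0 : ℝ) 1, ContinuousAt (γ e) t := fun e t ht =>
    ((Γ.arc_smooth e).contDiffAt (Icc_mem_nhds ht.1 ht.2)).continuousAt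
  let K : E → Set ℝ := fun e => Icc 0 1 ∩ γ e ⁻¹' Wᶜ
  have hK : ∀ e, IsCompact (K e) := fun e =>
    isCompact_Icc.of_isClosed_subset
      ((Γ.continuousOn_arc e).preimage_isClosed_of_isClosed isClosed_Icc hW.isClosed_compl)
      inter_subset_left
  have hKI : ∀ e, K e ⊆ Ioo 0 1 := by
    rintro e t ⟨ht, htW⟩
    obtain ⟨x, y, -, hx, hy⟩ := Γ.arc_ends e
    refine ⟨lt_of_le_of_ne ht.1 ?_, lt_of_le_of_ne ht.2 ?_⟩
    · rintro rfl
      refine htW ?_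
      simp only [γ, hx]
      exact hvW x
    · rintro rfl
      refine htW ?_
      simp only [γ, hy]
      exact hvW y
  have hsum : ∀ a x, fderiv ℝ (fun x => F x + P a x) x = fderiv ℝ F x + fderiv ℝ (P a) x :=
    fun a x => fderiv_fun_add (hF.smooth.differentiable (by simp) x)
      ((hP a).differentiable (by simp) x)
  have hP0 : ∀ x, fderiv ℝ (P a₀) x = 0 := fun x => by
    have : P a₀ = fun _ => 0 := funext ha₀
    rw [this]
    simp
  have hev : ∀ e, ∀ᶠ a in 𝓝 a₀, ∀ t ∈ K e,
      0 < σ e * (fderiv ℝ F (γ e t) + fderiv ℝ (P a) (γ e t)) (deriv (γ e) t) := by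
    intro e
    refine (hK e).eventually_forall_of_forall_eventually fun t ht => ?_
    have hti := hKI e ht
    have c1 : ContinuousAt (deriv (γ e)) t :=
      (((Γ.arc_smooth e).mono Ioo_subset_Icc_self).continuousOn_deriv_of_isOpen isOpen_Ioo
        (by simp)).continuousAt (isOpen_Ioo.mem_nhds hti)
    have c2 : ContinuousAt (fun z : A × ℝ => γ e z.2) (a₀, t) :=
      ContinuousAt.comp (g := γ e) (f := Prod.snd) (x := (a₀, t)) (hcont e t hti) continuousAt_snd
    have c3 : ContinuousAt (fun z : A × ℝ => fderiv ℝ F (γ e z.2)) (a₀, t) :=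
      ContinuousAt.comp (f := fun z : A × ℝ => γ e z.2)
        (hF.smooth.continuous_fderiv (by simp)).continuousAt c2
    have c4 : ContinuousAt (fun z : A × ℝ => fderiv ℝ (P z.1) (γ e z.2)) (a₀, t) :=
      ContinuousAt.comp (f := fun z : A × ℝ => (z.1, γ e z.2)) hP'.continuousAt
        (continuousAt_fst.prodMk c2)
    have c5 : ContinuousAt (fun z : A × ℝ => deriv (γ e) z.2) (a₀, t) :=
      ContinuousAt.comp (g := deriv (γ e)) (f := Prod.snd) (x := (a₀, t)) c1 continuousAt_snd
    have c6 := ((c3.add c4).clm_apply c5).const_mul (σ e)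
    refine c6.eventually_const_lt ?_
    simp only [Pi.add_apply, hP0, add_zero]
    have := hF.deriv_pos e t hti
    rwa [(hasDerivAt_comp_arc hF.smooth e hti).deriv] at this
  filter_upwards [Filter.eventually_all.2 hev] with a ha
  refine ⟨hF.smooth.add (hP a), fun v => ?_, fun e t ht => ?_⟩
  · rw [hPW a _ (hvW v), add_zero, hF.vert]
  · by_cases htW : γ e t ∈ W
    · have : (fun t => F (Γ.arc e t) + P a (Γ.arc e t)) =ᶠ[𝓝 t] fun t => F (Γ.arc e t) := by
        filter_upwards [(hcont e t ht).eventually (hW.eventually_mem htW)] with t' ht'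
        rw [hPW a _ ht', add_zero]
      rw [this.deriv_eq]
      exact hF.deriv_pos e t ht
    · rw [(hasDerivAt_comp_arc (hF.smooth.add (hP a)) e ht).deriv]
      have := ha e t ⟨Ioo_subset_Icc_self ht, htW⟩
      rwa [← hsum] at this

end Perturbation

end SmoothEmbedding

/-! ### Perturbation to a Morse function with distinct critical values -/

theorem eq_of_mem_interior {χ : E3 → ℝ} {a : ℝ} {x : E3} (h : x ∈ interior {x | χ x = a}) :
    χ x = a :=
  interior_subset (s := {x | χ x = a}) h

/-- A smooth function which is locally constant near finitely many points, with prescribed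
values. -/
theorem exists_contDiff_eventuallyEq_const {S : Set E3} (hS : S.Finite) (n : E3 → ℝ) :
    ∃ χ : E3 → ℝ, ContDiff ℝ ∞ χ ∧ ∀ z ∈ S, ∀ᶠ x in 𝓝 z, χ x = n z := by
  have hr : ∀ᶠ r in 𝓝[>] (0 : ℝ), ∀ z ∈ S, ∀ z' ∈ S, z ≠ z' → 2 * r < dist z z' := by
    refine (hS.eventually_all).2 fun z _ => (hS.eventually_all).2 fun z' _ => ?_
    by_cases h : z = z'
    · exact Eventually.of_forall fun r h' => absurd h h'
    · filter_upwards [Ioo_mem_nhdsGT (half_pos (dist_pos.2 h))] with r hr _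
      linarith [hr.2]
  obtain ⟨r, hr, hr0⟩ := (hr.and self_mem_nhdsWithin).exists
  replace hr0 : 0 < r := hr0
  let T : E3 → Set ℝ := fun x => {y | ∀ z ∈ S, x ∈ Metric.closedBall z r → y = n z}
  have hT : ∀ x, Convex ℝ (T x) := by
    intro x y hy z hz α β _ _ hαβ p hp hx
    rw [hy p hp hx, hz p hp hx, ← add_smul, hαβ, one_smul]
  have hoff : ∀ x, ∀ᶠ y in 𝓝 x, ∀ z ∈ S, x ∉ Metric.closedBall z r →
      y ∉ Metric.closedBall z r := by
    intro x
    refine (hS.eventually_all).2 fun z _ => ?_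
    by_cases h : x ∈ Metric.closedBall z r
    · exact Eventually.of_forall fun y h' => absurd h h'
    · filter_upwards [Metric.isClosed_closedBall.isOpen_compl.mem_nhds h] with y hy _ using hy
  obtain ⟨χ, hχ⟩ := exists_contMDiffMap_forall_mem_convex_of_local_const (n := (⊤ : ℕ∞))
    𝓘(ℝ, E3) hT (by
      intro x
      by_cases hx : ∃ z ∈ S, x ∈ Metric.closedBall z r
      · obtain ⟨z, hz, hxz⟩ := hx
        refine ⟨n z, ?_⟩
        filter_upwards [hoff x] with y hy z' hz' hyz'
        by_cases h : z = z'
        · rw [h]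
        · exfalso
          by_cases hxz' : x ∈ Metric.closedBall z' r
          · have h1 := hr z hz z' hz' h
            have h2 := dist_triangle_left z z' x
            rw [Metric.mem_closedBall] at hxz hxz'
            linarith
          · exact hy z' hz' hxz' hyz'
      · push Not at hx
        refine ⟨0, ?_⟩
        filter_upwards [hoff x] with y hy z hz hyz
        exact absurd hyz (hy z hz (hx z hz)))
  refine ⟨χ, χ.contMDiff.contDiff, fun z hz => ?_⟩
  filter_upwards [Metric.closedBall_mem_nhds z hr0] with x hx
  exact hχ x z hz hx

namespace SmoothEmbedding

variable {V E : Type*} {G : Multigraph V E} {Γ : SmoothEmbedding G} {c : V → ℝ} {σ : E → ℝ}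
  {F : E3 → ℝ}

theorem fderiv_add_eq {P : E3 → ℝ} (hF : ContDiff ℝ ∞ F) (hP : ContDiff ℝ ∞ P) (x : E3) :
    fderiv ℝ (fun x => F x + P x) x = fderiv ℝ F x + fderiv ℝ P x :=
  fderiv_fun_add (hF.differentiable (by simp) x) (hP.differentiable (by simp) x)

theorem IsHeight.exists_nondegenerate [Finite V] [Finite E] (hF : Γ.IsHeight c σ F)
    (hiso : ∀ v, ∀ᶠ y in 𝓝[≠] (Γ.vert v : E3), ‖y‖ = 1 → ¬ IsSphereCritical F y)
    (hcrit : ∀ v, IsSphereCritical F (Γ.vert v) → IsSphereNondegenerate F (Γ.vert v)) :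
    ∃ F', Γ.IsHeight c σ F' ∧
      ∀ x, ‖x‖ = 1 → IsSphereCritical F' x → IsSphereNondegenerate F' x := by
  choose O hO hOo hOv using fun v =>
    eventually_nhds_iff.1 (eventually_nhdsWithin_iff.1 (hiso v))
  set Z : Set E3 := range fun v => (Γ.vert v : E3) with hZ
  have hZc : IsClosed Z := (finite_range _).isClosed
  have hOU : IsOpen (⋃ v, O v) := isOpen_iUnion hOo
  obtain ⟨χ, hχ0, hχ1, -⟩ := exists_contMDiffMap_zero_one_nhds_of_isClosed (n := (⊤ : ℕ∞))
    𝓘(ℝ, E3) hZc hOU.isClosed_compl (by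
      rw [disjoint_compl_right_iff_subset]
      rintro _ ⟨v, rfl⟩
      exact mem_iUnion.2 ⟨v, hOv v⟩)
  have hχ : ContDiff ℝ ∞ χ := χ.contMDiff.contDiff
  rw [eventually_nhdsSet_iff_forall] at hχ0 hχ1
  set W₀ := interior {x | χ x = 0} with hW₀
  set W₁ := interior {x | χ x = 1} with hW₁
  have hZW : ∀ v, (Γ.vert v : E3) ∈ W₀ := fun v =>
    mem_interior_iff_mem_nhds.2 (hχ0 _ ⟨v, rfl⟩)
  have hOW : ∀ x, x ∉ W₁ → x ∈ ⋃ v, O v := fun x hx => by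
    by_contra h
    exact hx (mem_interior_iff_mem_nhds.2 (hχ1 x h))
  have hFO : ∀ x, x ∈ ⋃ v, O v → x ∉ Z → ‖x‖ = 1 → ¬ IsSphereCritical F x := by
    intro x hx hxZ hx1
    obtain ⟨v, hv⟩ := mem_iUnion.1 hx
    exact hO v x hv (fun h => hxZ ⟨v, (mem_singleton_iff.1 h).symm⟩) hx1
  let P : E3 → E3 → ℝ := fun a x => χ x * inner ℝ a x
  have hPd : ∀ a x, HasFDerivAt (P a) (χ x • innerSL ℝ a + inner ℝ a x • fderiv ℝ χ x) x :=
    fun a x => ((hχ.differentiable (by simp) x).hasFDerivAt).mul (innerSL ℝ a).hasFDerivAt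
  have hP : ∀ a, ContDiff ℝ ∞ (P a) := fun a => hχ.mul (innerSL ℝ a).contDiff
  have hP' : Continuous fun z : E3 × E3 => fderiv ℝ (P z.1) z.2 := by
    have h1 : (fun z : E3 × E3 => fderiv ℝ (P z.1) z.2) = fun z =>
        χ z.2 • innerSL ℝ z.1 + inner ℝ z.1 z.2 • fderiv ℝ χ z.2 :=
      funext fun z => (hPd z.1 z.2).fderiv
    have h2 := hχ.continuous
    have h3 : Continuous (fderiv ℝ χ) := hχ.continuous_fderiv (by simp)
    rw [h1]
    fun_prop
  have hP0 : ∀ x, P 0 x = 0 := fun x => by simp [P]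
  have hPd0 : ∀ x, fderiv ℝ (P 0) x = 0 := fun x => by rw [(hPd 0 x).fderiv]; simp
  have hPW : ∀ a, ∀ x ∈ W₀, P a x = 0 := fun a x hx => by
    have : χ x = 0 := eq_of_mem_interior hx
    simp [P, this]
  have hev1 := hF.eventually_add hP hP' hP0 isOpen_interior hZW hPW
  set K : Set E3 := Metric.sphere 0 1 \ (W₀ ∪ W₁) with hK
  have hKc : IsCompact K := (isCompact_sphere 0 1).diff (isOpen_interior.union isOpen_interior)
  have hev2 : ∀ᶠ a in 𝓝 (0 : E3), ∀ x ∈ K,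
      tangentialPart (fderiv ℝ F x + fderiv ℝ (P a) x) x ≠ 0 := by
    refine hKc.eventually_tangentialPart_ne_zero
      (α := fun a x => fderiv ℝ F x + fderiv ℝ (P a) x) ?_ ?_
    · exact ((hF.smooth.continuous_fderiv (by simp)).comp continuous_snd).add hP'
    · rintro x ⟨hx1, hx2⟩
      have hx1' : ‖x‖ = 1 := by simpa using hx1
      rw [mem_union, not_or] at hx2
      simp only [hPd0, add_zero]
      refine (not_congr (isSphereCritical_iff_tangentialPart hx1')).1 (hFO x (hOW x hx2.2) ?_ hx1')
      rintro ⟨v, rfl⟩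
      exact hx2.1 (hZW v)
  have hdense := MeasureTheory.Measure.dense_of_ae
    (ae_isSphereNondegenerate_add_inner hF.smooth)
  obtain ⟨a, ha3, ha1, ha2⟩ := hdense.inter_nhds_nonempty (hev1.and hev2)
  refine ⟨fun x => F x + P a x, ha1, fun x hx hcx => ?_⟩
  by_cases hx0 : x ∈ W₀
  · have heq : (fun x => F x + P a x) =ᶠ[𝓝 x] F := by
      filter_upwards [isOpen_interior.mem_nhds hx0] with y hy
      rw [hPW a y hy, add_zero]
    rw [heq.isSphereCritical_iff] at hcx
    rw [heq.isSphereNondegenerate_iff]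
    by_cases hxZ : x ∈ Z
    · obtain ⟨v, rfl⟩ := hxZ
      exact hcrit v hcx
    · refine absurd hcx (hFO x (hOW x fun h1 => ?_) hxZ hx)
      have e0 : χ x = 0 := eq_of_mem_interior hx0
      have e1 : χ x = 1 := eq_of_mem_interior h1
      rw [e0] at e1
      exact zero_ne_one e1
  by_cases hx1 : x ∈ W₁
  · have heq : (fun x => F x + P a x) =ᶠ[𝓝 x] fun x => F x + inner ℝ a x := by
      filter_upwards [isOpen_interior.mem_nhds hx1] with y hy
      have : χ y = 1 := eq_of_mem_interior hy
      simp only [P, this, one_mul]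
    rw [heq.isSphereCritical_iff] at hcx
    rw [heq.isSphereNondegenerate_iff]
    exact ha3 x hx hcx
  · rw [isSphereCritical_iff_tangentialPart hx, fderiv_add_eq hF.smooth (hP a)] at hcx
    exact absurd hcx (ha2 x ⟨by simpa using hx, by simp [hx0, hx1]⟩)

theorem IsHeight.exists_injOn_critical [Finite V] [Finite E] (hF : Γ.IsHeight c σ F)
    (hc : Function.Injective c)
    (hnd : ∀ x, ‖x‖ = 1 → IsSphereCritical F x → IsSphereNondegenerate F x) :
    ∃ F', Γ.IsHeight c σ F' ∧
      (∀ x, ‖x‖ = 1 → IsSphereCritical F' x → IsSphereNondegenerate F' x) ∧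
      InjOn F' {x | ‖x‖ = 1 ∧ IsSphereCritical F' x} := by
  classical
  set Z : Set E3 := range fun v => (Γ.vert v : E3) with hZ
  set C : Set E3 := {x : E3 | ‖x‖ = 1 ∧ IsSphereCritical F x} with hC
  have hCf : C.Finite := finite_setOf_isSphereCritical hF.smooth hnd
  have hSf : (C ∪ Z).Finite := hCf.union (finite_range _)
  obtain ⟨m, hm⟩ := countable_iff_exists_injOn.1 hSf.countable
  let n : E3 → ℝ := fun x => if x ∈ Z then 0 else (m x : ℝ) + 1
  have hnZ : ∀ x ∈ Z, n x = 0 := fun x hx => if_pos hx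
  have hn : ∀ x ∈ C, ∀ y ∈ C, x ≠ y → n x = n y → x ∈ Z ∧ y ∈ Z := by
    intro x hx y hy hxy h
    by_cases hxZ : x ∈ Z <;> by_cases hyZ : y ∈ Z
    · exact ⟨hxZ, hyZ⟩
    · simp only [n, hxZ, hyZ, if_true, if_false] at h
      linarith [Nat.cast_nonneg (α := ℝ) (m y)]
    · simp only [n, hxZ, hyZ, if_true, if_false] at h
      linarith [Nat.cast_nonneg (α := ℝ) (m x)]
    · simp only [n, hxZ, hyZ, if_false] at h
      exact absurd (hm (Or.inl hx) (Or.inl hy) (by exact_mod_cast add_right_cancel h)) hxy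
  obtain ⟨χ, hχ, hχn⟩ := exists_contDiff_eventuallyEq_const hSf n
  let P : ℝ → E3 → ℝ := fun s x => s * χ x
  have hP : ∀ s, ContDiff ℝ ∞ (P s) := fun s => contDiff_const.mul hχ
  have hPd : ∀ s x, fderiv ℝ (P s) x = s • fderiv ℝ χ x := fun s x =>
    ((hχ.differentiable (by simp) x).hasFDerivAt.const_mul s).fderiv
  have hP' : Continuous fun z : ℝ × E3 => fderiv ℝ (P z.1) z.2 := by
    simp only [hPd]
    exact continuous_fst.smul ((hχ.continuous_fderiv (by simp)).comp continuous_snd)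
  let W : E3 → Set E3 := fun z => interior {x | χ x = n z}
  have hzW : ∀ z ∈ C ∪ Z, z ∈ W z := fun z hz => mem_interior_iff_mem_nhds.2 (hχn z hz)
  have hev1 := hF.eventually_add hP hP' (a₀ := 0) (fun x => zero_mul _)
    (W := interior {x | χ x = 0}) isOpen_interior
    (fun v => by
      have h1 := hzW _ (Or.inr (mem_range_self v))
      simp only [W, hnZ _ (mem_range_self v)] at h1
      exact h1)
    (fun s x hx => by
      have : χ x = 0 := eq_of_mem_interior hx
      simp [P, this])
  have hKc : IsCompact (Metric.sphere (0 : E3) 1 \ ⋃ z ∈ C, W z) :=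
    (isCompact_sphere 0 1).diff (isOpen_biUnion fun z _ => isOpen_interior)
  have hev2 : ∀ᶠ s in 𝓝 (0 : ℝ), ∀ x ∈ Metric.sphere (0 : E3) 1 \ ⋃ z ∈ C, W z,
      tangentialPart (fderiv ℝ F x + fderiv ℝ (P s) x) x ≠ 0 := by
    refine hKc.eventually_tangentialPart_ne_zero
      (α := fun s x => fderiv ℝ F x + fderiv ℝ (P s) x) ?_ ?_
    · exact ((hF.smooth.continuous_fderiv (by simp)).comp continuous_snd).add hP'
    · rintro x ⟨hx1, hx2⟩
      have hx1' : ‖x‖ = 1 := by simpa using hx1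
      simp only [hPd, zero_smul, add_zero]
      refine (not_congr (isSphereCritical_iff_tangentialPart hx1')).1 fun h => hx2 ?_
      exact mem_iUnion₂.2 ⟨x, ⟨hx1', h⟩, hzW x (Or.inl ⟨hx1', h⟩)⟩
  have hev3 : ∀ᶠ s in 𝓝[≠] (0 : ℝ), ∀ x ∈ C, ∀ y ∈ C, n x ≠ n y →
      F x + s * n x ≠ F y + s * n y := by
    refine (hCf.eventually_all).2 fun x _ => (hCf.eventually_all).2 fun y _ => ?_
    by_cases hxy : n x = n y
    · exact Eventually.of_forall fun s h => absurd hxy h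
    · have hx : n x - n y ≠ 0 := sub_ne_zero.2 hxy
      filter_upwards [((finite_singleton ((F y - F x) / (n x - n y))).subset
        (sdiff_subset (t := {(0 : ℝ)}))).isClosed.isOpen_compl.mem_nhds
          (x := (0 : ℝ)) (by simp) |> mem_nhdsWithin_of_mem_nhds, self_mem_nhdsWithin]
        with s hs hs0 _ h
      refine hs ⟨?_, hs0⟩
      rw [mem_singleton_iff, eq_div_iff hx]
      linarith
  obtain ⟨s, ⟨hs1, hs2⟩, hs3⟩ :=
    ((hev1.and hev2).filter_mono (nhdsWithin_le_nhds (s := {0}ᶜ)) |>.and hev3).exists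
  have hloc : ∀ x, ∀ z, x ∈ W z →
      (fun y => F y + P s y) =ᶠ[𝓝 x] fun y => F y + s * n z := by
    intro x z hxz
    filter_upwards [isOpen_interior.mem_nhds hxz] with y hy
    have : χ y = n z := eq_of_mem_interior hy
    simp only [P, this]
  have hcrit : ∀ x, ‖x‖ = 1 → IsSphereCritical (fun y => F y + P s y) x →
      x ∈ C ∧ IsSphereNondegenerate (fun y => F y + P s y) x := by
    intro x hx hcx
    by_cases hxW : x ∈ ⋃ z ∈ C, W z
    · obtain ⟨z, _, hxz⟩ := mem_iUnion₂.1 hxW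
      rw [(hloc x z hxz).isSphereCritical_iff, isSphereCritical_add_const] at hcx
      rw [(hloc x z hxz).isSphereNondegenerate_iff, isSphereNondegenerate_add_const]
      exact ⟨⟨hx, hcx⟩, hnd x hx hcx⟩
    · rw [isSphereCritical_iff_tangentialPart hx, fderiv_add_eq hF.smooth (hP s)] at hcx
      exact absurd hcx (hs2 x ⟨by simpa using hx, hxW⟩)
  refine ⟨fun x => F x + P s x, hs1, fun x hx hcx => (hcrit x hx hcx).2, ?_⟩
  rintro x ⟨hx, hcx⟩ y ⟨hy, hcy⟩ hxy
  have hxC := (hcrit x hx hcx).1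
  have hyC := (hcrit y hy hcy).1
  by_contra hne
  have hχx : χ x = n x := (hχn x (Or.inl hxC)).self_of_nhds
  have hχy : χ y = n y := (hχn y (Or.inl hyC)).self_of_nhds
  simp only [P, hχx, hχy] at hxy
  by_cases hnn : n x = n y
  · obtain ⟨⟨v, rfl⟩, ⟨v', rfl⟩⟩ := hn x hxC y hyC hne hnn
    rw [hnn, hF.vert, hF.vert] at hxy
    exact hne (congrArg (fun v => (Γ.vert v : E3)) (hc (add_right_cancel hxy)))
  · exact hs3 x hxC y hyC hnn hxy

/-- Every injective assignment of heights to the vertices extends to a generic Morse function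
which is monotone on every edge. -/
theorem exists_generic_isHeight [Finite V] [Finite E] (Γ : SmoothEmbedding G)
    (hdeg : ∀ v, G.degree v ≤ 4) (hloop : G.Loopless) (c : V → ℝ) (hc : Function.Injective c) :
    ∃ σ F, (∀ e, σ e = 1 ∨ σ e = -1) ∧ Γ.IsHeight c σ F ∧ Γ.IsGeneric (fun x : S2 => F x) := by
  obtain ⟨σ, F, hσ, hF, hiso, hcrit⟩ := Γ.exists_isHeight hdeg hloop c hc
  obtain ⟨F', hF', hnd⟩ := hF.exists_nondegenerate hiso hcrit
  obtain ⟨F'', hF'', hnd', hinj⟩ := hF'.exists_injOn_critical hc hnd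
  refine ⟨σ, F'', hσ, hF'', ⟨isMorse_restrict hF''.smooth fun p => hnd' p (by simp), ?_, ?_⟩⟩
  · intro p hp q hq hpq
    rw [mem_criticalSet_restrict_iff hF''.smooth] at hp hq
    exact Subtype.ext (hinj ⟨by simp, hp⟩ ⟨by simp, hq⟩ hpq)
  · intro v v' h
    simp only [hF''.vert] at h
    exact hc h

end SmoothEmbedding

/-! ### Counting points in level sets -/

namespace Multigraph

variable {V E : Type*} (G : Multigraph V E)

theorem mem_edgeBoundary_of_ends {A : Set V} {e : E} {u v : V} (h : G.ends e = s(u, v))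
    (huv : u ∈ A ∧ v ∉ A ∨ v ∈ A ∧ u ∉ A) : e ∈ G.edgeBoundary A := by
  rcases huv with ⟨hu, hv⟩ | ⟨hv, hu⟩
  · exact ⟨u, v, h, hu, hv⟩
  · exact ⟨v, u, h.trans Sym2.eq_swap, hv, hu⟩

theorem edgeBoundary_congr {A B : Set V} (h : ∀ e, ∀ v ∈ G.ends e, v ∈ A ↔ v ∈ B) :
    G.edgeBoundary A = G.edgeBoundary B := by
  ext e
  constructor
  · rintro ⟨u, v, huv, hu, hv⟩
    have hue : u ∈ G.ends e := huv ▸ Sym2.mem_mk_left u v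
    have hve : v ∈ G.ends e := huv ▸ Sym2.mem_mk_right u v
    exact ⟨u, v, huv, (h e u hue).1 hu, fun h' => hv ((h e v hve).2 h')⟩
  · rintro ⟨u, v, huv, hu, hv⟩
    have hue : u ∈ G.ends e := huv ▸ Sym2.mem_mk_left u v
    have hve : v ∈ G.ends e := huv ▸ Sym2.mem_mk_right u v
    exact ⟨u, v, huv, (h e u hue).2 hu, fun h' => hv ((h e v hve).1 h')⟩

theorem ncard_edgeBoundary_Iic_le [Fintype V] (φ : Fin (Fintype.card V) ≃ V)
    (i : Fin (Fintype.card V)) : (G.edgeBoundary (φ '' Iic i)).ncard ≤ G.orderingWidth φ :=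
  Finset.le_sup (f := fun i => (G.edgeBoundary (φ '' Iic i)).ncard) (Finset.mem_univ i)

/-- Isolated vertices do not matter for edge boundaries, so that it suffices that `A` is an
initial segment up to isolated vertices. -/
theorem ncard_edgeBoundary_le_orderingWidth [Fintype V] (φ : Fin (Fintype.card V) ≃ V) {A : Set V}
    (hA : ∀ u v, (∃ e, u ∈ G.ends e) → v ∈ A → (∃ e, v ∈ G.ends e) → φ.symm u ≤ φ.symm v →
      u ∈ A) : (G.edgeBoundary A).ncard ≤ G.orderingWidth φ := by
  classical
  by_cases hne : ∃ v ∈ A, ∃ e, v ∈ G.ends e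
  · obtain ⟨v, ⟨hvA, hve⟩, hmax⟩ := Set.exists_max_image {v | v ∈ A ∧ ∃ e, v ∈ G.ends e}
      (fun v => φ.symm v) (Set.toFinite _) hne
    have : G.edgeBoundary A = G.edgeBoundary (φ '' Iic (φ.symm v)) := by
      refine G.edgeBoundary_congr fun e u hu => ?_
      have : u ∈ φ '' Iic (φ.symm v) ↔ φ.symm u ≤ φ.symm v := by
        rw [Equiv.image_eq_preimage_symm]
        rfl
      rw [this]
      exact ⟨fun h => hmax u ⟨h, e, hu⟩, fun h => hA u v ⟨e, hu⟩ hvA hve h⟩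
    rw [this]
    exact G.ncard_edgeBoundary_Iic_le φ _
  · have : G.edgeBoundary A = ∅ := by
      ext e
      simp only [mem_empty_iff_false, iff_false]
      rintro ⟨u, v, huv, hu, -⟩
      exact hne ⟨u, hu, e, huv ▸ Sym2.mem_mk_left u v⟩
    rw [this, ncard_empty]
    exact Nat.zero_le _

theorem one_le_orderingWidth [Fintype V] [Finite E] (hloop : G.Loopless) (e : E)
    (φ : Fin (Fintype.card V) ≃ V) : 1 ≤ G.orderingWidth φ := by
  have key : ∀ u v, G.ends e = s(u, v) → φ.symm u < φ.symm v → 1 ≤ G.orderingWidth φ := by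
    intro u v huv hlt
    refine le_trans ?_ (G.ncard_edgeBoundary_Iic_le φ (φ.symm u))
    refine (Set.ncard_pos (Set.toFinite _)).2 ⟨e, u, v, huv, ?_, ?_⟩
    · exact ⟨φ.symm u, self_mem_Iic, φ.apply_symm_apply u⟩
    · rintro ⟨i, hi, rfl⟩
      rw [φ.symm_apply_apply] at hlt
      exact absurd (mem_Iic.1 hi) (not_le.2 hlt)
  obtain ⟨⟨u, v⟩, huv⟩ := Quot.exists_rep (G.ends e)
  replace huv : s(u, v) = G.ends e := huv
  have hne : u ≠ v := by
    rintro rfl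
    exact hloop e (huv ▸ Sym2.mk_isDiag_iff.2 rfl)
  rcases lt_or_gt_of_ne (φ.symm.injective.ne hne) with h | h
  · exact key u v huv.symm h
  · exact key v u (huv.symm.trans Sym2.eq_swap) h

theorem exists_orderingWidth_eq_width [Fintype V] :
    ∃ φ : Fin (Fintype.card V) ≃ V, G.orderingWidth φ = G.width :=
  Nat.sInf_mem (s := range fun φ : Fin (Fintype.card V) ≃ V => G.orderingWidth φ)
    ⟨_, (Fintype.equivFin V).symm, rfl⟩

theorem width_le_orderingWidth [Fintype V] (φ : Fin (Fintype.card V) ≃ V) :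
    G.width ≤ G.orderingWidth φ :=
  Nat.sInf_le ⟨φ, rfl⟩

end Multigraph

namespace SmoothEmbedding

variable {V E : Type*} {G : Multigraph V E} (Γ : SmoothEmbedding G)

theorem ncard_edgeBoundary_le_widthWith [Finite V] [Finite E] {f : S2 → ℝ} (hf : Continuous f)
    {A : Set V} {m : ℝ} (hA : ∀ v ∈ A, f (Γ.vert v) ≤ m) (hA' : ∀ v, v ∉ A → m < f (Γ.vert v)) :
    ((G.edgeBoundary A).ncard : ℕ∞) ≤ Γ.widthWith f := by
  have hev : ∀ᶠ t in 𝓝[>] m, ∀ v, v ∉ A → t < f (Γ.vert v) := by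
    refine Filter.eventually_all.2 fun v => ?_
    by_cases hv : v ∈ A
    · exact Eventually.of_forall fun t h => absurd hv h
    · filter_upwards [Ioo_mem_nhdsGT (hA' v hv)] with t ht _ using ht.2
  obtain ⟨t, ht, hmt⟩ := (hev.and self_mem_nhdsWithin).exists
  replace hmt : m < t := hmt
  have hcross : ∀ e ∈ G.edgeBoundary A, ∃ τ ∈ Ioo (0 : ℝ) 1, f (Γ.arc e τ) = t := by
    rintro e ⟨u, v, huv, hu, hv⟩
    obtain ⟨x, y, hxy, hx, hy⟩ := Γ.arc_ends e
    have hcont : ContinuousOn (fun τ => f (Γ.arc e τ)) (Icc 0 1) :=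
      hf.comp_continuousOn (Topology.IsInducing.subtypeVal.continuousOn_iff.2
        (Γ.continuousOn_arc e))
    rw [huv, Sym2.eq_iff] at hxy
    have hu' : f (Γ.vert u) < t := (hA u hu).trans_lt hmt
    have hv' : t < f (Γ.vert v) := ht v hv
    rcases hxy with ⟨rfl, rfl⟩ | ⟨rfl, rfl⟩
    · refine intermediate_value_Ioo zero_le_one hcont ?_
      rw [hx, hy]
      exact ⟨hu', hv'⟩
    · refine intermediate_value_Ioo' zero_le_one hcont ?_
      rw [hx, hy]
      exact ⟨hu', hv'⟩
  rw [(Set.toFinite _).cast_ncard_eq]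
  refine le_trans ?_ (le_iSup (fun t : ℝ => (f ⁻¹' {t} ∩ Γ.carrier).encard) t)
  choose! τ hτ hτt using hcross
  refine Set.encard_le_encard_of_injOn (f := fun e => Γ.arc e (τ e)) ?_ ?_
  · intro e he
    exact ⟨hτt e he, Or.inr (mem_iUnion.2 ⟨e, τ e, Ioo_subset_Icc_self (hτ e he), rfl⟩)⟩
  · intro e he e' he' h
    by_contra hne
    exact Γ.arc_ne_arc e e' hne _ (hτ e he) _ (hτ e' he') h

theorem width_le_widthWith [Fintype V] [Finite E] {f : S2 → ℝ} (hf : Continuous f)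
    (hinj : Function.Injective fun v => f (Γ.vert v)) : (G.width : ℕ∞) ≤ Γ.widthWith f := by
  let e := Fintype.equivFin V
  let g : Fin (Fintype.card V) → ℝ := fun i => f (Γ.vert (e.symm i))
  let φ : Fin (Fintype.card V) ≃ V := (Tuple.sort g).trans e.symm
  have hmono : StrictMono fun i => f (Γ.vert (φ i)) :=
    (Tuple.monotone_sort g).strictMono_of_injective
      ((hinj.comp e.symm.injective).comp (Tuple.sort g).injective)
  have hi : ∀ i, ((G.edgeBoundary (φ '' Iic i)).ncard : ℕ∞) ≤ Γ.widthWith f := by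
    intro i
    refine Γ.ncard_edgeBoundary_le_widthWith hf (m := f (Γ.vert (φ i))) ?_ ?_
    · rintro _ ⟨j, hj, rfl⟩
      exact hmono.monotone hj
    · intro v hv
      obtain ⟨j, rfl⟩ := φ.surjective v
      refine hmono (lt_of_not_ge fun h => hv ⟨j, h, rfl⟩)
  refine le_trans (Nat.cast_le.2 (G.width_le_orderingWidth φ)) ?_
  induction h : Γ.widthWith f using ENat.recTopCoe with
  | top => exact le_top
  | coe n =>
    rw [Nat.cast_le]
    refine Finset.sup_le fun i _ => ?_
    have := hi i
    rwa [h, Nat.cast_le] at this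

theorem IsHeight.strictMonoOn {c : V → ℝ} {σ : E → ℝ} {F : E3 → ℝ} {Γ : SmoothEmbedding G}
    (hF : Γ.IsHeight c σ F) (e : E) : StrictMonoOn (fun t => σ e * F (Γ.arc e t)) (Icc 0 1) := by
  refine strictMonoOn_of_deriv_pos (convex_Icc 0 1) ?_ ?_
  · exact continuousOn_const.mul (hF.smooth.continuous.comp_continuousOn (Γ.continuousOn_arc e))
  · intro t ht
    rw [interior_Icc] at ht
    rw [deriv_const_mul_field]
    exact hF.deriv_pos e t ht

/-- If every point of the graph at the level `t` lies on an edge of `∂A`, then there are at most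
`|∂A|` such points. -/
theorem IsHeight.encard_level_le [Finite E] {c : V → ℝ} {σ : E → ℝ} {F : E3 → ℝ}
    {Γ : SmoothEmbedding G} (hF : Γ.IsHeight c σ F) {t : ℝ} {A : Set V}
    (h : ∀ p : S2, F p = t → p ∈ Γ.carrier →
      ∃ e ∈ G.edgeBoundary A, ∃ τ ∈ Icc (0 : ℝ) 1, Γ.arc e τ = p) :
    ((fun x : S2 => F x) ⁻¹' {t} ∩ Γ.carrier).encard ≤ (G.edgeBoundary A).ncard := by
  rw [(Set.toFinite _).cast_ncard_eq]
  have h' : ∀ p ∈ (fun x : S2 => F x) ⁻¹' {t} ∩ Γ.carrier, ∃ e, e ∈ G.edgeBoundary A ∧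
      ∃ τ ∈ Icc (0 : ℝ) 1, Γ.arc e τ = p := fun p hp => h p hp.1 hp.2
  rcases isEmpty_or_nonempty E with hE | hE
  · have : (fun x : S2 => F x) ⁻¹' {t} ∩ Γ.carrier = ∅ := by
      ext p
      simp only [mem_empty_iff_false, iff_false]
      intro hp
      obtain ⟨e, -⟩ := h' p hp
      exact hE.elim e
    rw [this, encard_empty]
    exact bot_le
  choose! ε hε τ hτ hp using h'
  refine Set.encard_le_encard_of_injOn (f := ε) hε ?_
  intro p hpS p' hpS' hee
  have h1 : F (Γ.arc (ε p) (τ p)) = t := by rw [hp p hpS]; exact hpS.1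
  have h2 : F (Γ.arc (ε p) (τ p')) = t := by rw [hee, hp p' hpS']; exact hpS'.1
  have h3 : τ p = τ p' := (hF.strictMonoOn (ε p)).injOn (hτ p hpS) (hτ p' hpS')
    (by simp only [h1, h2])
  rw [← hp p hpS, ← hp p' hpS', h3, hee]

/-- A level which is attained in the interior of an edge lies strictly between the levels of its
end points. -/
theorem IsHeight.between {c : V → ℝ} {σ : E → ℝ} {F : E3 → ℝ} {Γ : SmoothEmbedding G}
    (hσ : ∀ e, σ e = 1 ∨ σ e = -1) (hF : Γ.IsHeight c σ F) (e : E) {τ : ℝ}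
    (hτ : τ ∈ Ioo (0 : ℝ) 1) : ∃ u v, G.ends e = s(u, v) ∧ c u < F (Γ.arc e τ) ∧
      F (Γ.arc e τ) < c v := by
  obtain ⟨x, y, hxy, hx, hy⟩ := Γ.arc_ends e
  have h1 := hF.strictMonoOn e (left_mem_Icc.2 zero_le_one) (Ioo_subset_Icc_self hτ) hτ.1
  have h2 := hF.strictMonoOn e (Ioo_subset_Icc_self hτ) (right_mem_Icc.2 zero_le_one) hτ.2
  simp only [hx, hy, hF.vert] at h1 h2
  rcases hσ e with h | h
  · rw [h] at h1 h2
    exact ⟨x, y, hxy, by linarith, by linarith⟩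
  · rw [h] at h1 h2
    exact ⟨y, x, hxy.trans Sym2.eq_swap, by linarith, by linarith⟩

theorem mem_carrier_cases {p : S2} (hp : p ∈ Γ.carrier) :
    (∃ v, Γ.vert v = p) ∨ ∃ e, ∃ τ ∈ Ioo (0 : ℝ) 1, Γ.arc e τ = p := by
  rcases hp with hp | hp
  · exact Or.inl hp
  · obtain ⟨e, τ, hτ, hp⟩ := mem_iUnion.1 hp
    obtain ⟨x, y, -, hx, hy⟩ := Γ.arc_ends e
    rcases hτ.1.eq_or_lt with h0 | h0
    · subst h0; exact Or.inl ⟨x, hx.symm.trans hp⟩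
    rcases hτ.2.eq_or_lt with h1 | h1
    · subst h1; exact Or.inl ⟨y, hy.symm.trans hp⟩
    · exact Or.inr ⟨e, τ, ⟨h0, h1⟩, hp⟩

theorem exists_vert_mem_arc {e : E} {v : V} (hv : v ∈ G.ends e) :
    ∃ τ ∈ Icc (0 : ℝ) 1, Γ.arc e τ = Γ.vert v := by
  obtain ⟨b, hb⟩ := (Γ.exists_pathEnd_eq_iff e v).2 hv
  cases b
  · exact ⟨0, by simp, hb⟩
  · exact ⟨1, by simp, hb⟩

theorem morseWidth_le_width [Fintype V] [Finite E] (hdeg : ∀ v, G.degree v ≤ 4)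
    (hloop : G.Loopless) (hedge : Nonempty V → Nonempty E) :
    Γ.morseWidth ≤ (G.width : ℕ∞) := by
  classical
  obtain ⟨φ, hφ⟩ := G.exists_orderingWidth_eq_width
  -- the isolated vertices are placed below all others
  let c : V → ℝ := fun v =>
    if ∃ e, v ∈ G.ends e then ((φ.symm v : ℕ) : ℝ) else ((φ.symm v : ℕ) : ℝ) - Fintype.card V
  have hlt : ∀ v, ((φ.symm v : ℕ) : ℝ) < Fintype.card V := fun v =>
    Nat.cast_lt.2 (φ.symm v).isLt
  have hnn : ∀ v, (0 : ℝ) ≤ ((φ.symm v : ℕ) : ℝ) := fun v => Nat.cast_nonneg _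
  have hc1 : ∀ v, (∃ e, v ∈ G.ends e) → c v = ((φ.symm v : ℕ) : ℝ) := fun v h => if_pos h
  have hc2 : ∀ v, ¬ (∃ e, v ∈ G.ends e) → c v = ((φ.symm v : ℕ) : ℝ) - Fintype.card V :=
    fun v h => if_neg h
  have hc : Function.Injective c := by
    intro u v h
    apply φ.symm.injective
    apply Fin.ext
    have : ((φ.symm u : ℕ) : ℝ) = ((φ.symm v : ℕ) : ℝ) := by
      by_cases hu : ∃ e, u ∈ G.ends e <;> by_cases hv : ∃ e, v ∈ G.ends e
      · rwa [hc1 u hu, hc1 v hv] at h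
      · rw [hc1 u hu, hc2 v hv] at h
        linarith [hnn u, hlt v]
      · rw [hc2 u hu, hc1 v hv] at h
        linarith [hnn v, hlt u]
      · rw [hc2 u hu, hc2 v hv] at h
        linarith
    exact_mod_cast this
  obtain ⟨σ, F, hσ, hF, hgen⟩ := Γ.exists_generic_isHeight hdeg hloop c hc
  refine (iInf₂_le (fun x : S2 => F x) hgen).trans (iSup_le fun t => ?_)
  rw [← hφ]
  by_cases hiso : ∃ v, c v = t ∧ ¬ ∃ e, v ∈ G.ends e
  · obtain ⟨v, hvt, hv⟩ := hiso
    have hsub : (fun x : S2 => F x) ⁻¹' {t} ∩ Γ.carrier ⊆ {Γ.vert v} := by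
      rintro p ⟨hpt, hp⟩
      replace hpt : F p = t := hpt
      rcases Γ.mem_carrier_cases hp with ⟨u, rfl⟩ | ⟨e, τ, hτ, rfl⟩
      · rw [hF.vert] at hpt
        rw [hc (hpt.trans hvt.symm), mem_singleton_iff]
      · obtain ⟨a, b, hab, ha, -⟩ := hF.between hσ e hτ
        rw [hpt, ← hvt, hc1 a ⟨e, hab ▸ Sym2.mem_mk_left a b⟩, hc2 v hv] at ha
        linarith [hnn a, hlt v]
    obtain ⟨e⟩ := hedge ⟨v⟩
    refine (Set.encard_le_encard hsub).trans ?_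
    rw [encard_singleton]
    exact_mod_cast G.one_le_orderingWidth hloop e φ
  push Not at hiso
  have hle : ∀ A : Set V, (∀ u v, c u ≤ c v → v ∈ A → u ∈ A) →
      (∀ p : S2, F p = t → p ∈ Γ.carrier →
        ∃ e ∈ G.edgeBoundary A, ∃ τ ∈ Icc (0 : ℝ) 1, Γ.arc e τ = p) →
      ((fun x : S2 => F x) ⁻¹' {t} ∩ Γ.carrier).encard ≤ (G.orderingWidth φ : ℕ∞) := by
    intro A hA h
    refine (hF.encard_level_le h).trans (Nat.cast_le.2 ?_)
    refine G.ncard_edgeBoundary_le_orderingWidth φ fun u v hu hvA hv huv => hA u v ?_ hvA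
    rw [hc1 u hu, hc1 v hv]
    exact_mod_cast huv
  have hinterior : ∀ e, ∀ τ ∈ Ioo (0 : ℝ) 1, F (Γ.arc e τ) = t →
      e ∈ G.edgeBoundary {v | c v < t} ∧ e ∈ G.edgeBoundary {v | c v ≤ t} := by
    intro e τ hτ ht
    obtain ⟨u, v, huv, hu, hv⟩ := hF.between hσ e hτ
    rw [ht] at hu hv
    exact ⟨⟨u, v, huv, hu, not_lt.2 hv.le⟩, ⟨u, v, huv, hu.le, not_le.2 hv⟩⟩
  by_cases hvert : ∃ v, c v = t
  · obtain ⟨v, hvt⟩ := hvert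
    obtain ⟨e, he⟩ := hiso v hvt
    obtain ⟨w, hw⟩ := Sym2.mem_iff_exists.1 he
    have hne : c w ≠ t := by
      intro h
      apply hloop e
      rw [hw, hc (h.trans hvt.symm)]
      exact Sym2.mk_isDiag_iff.2 rfl
    obtain ⟨τ, hτ, hτv⟩ := Γ.exists_vert_mem_arc he
    rcases lt_or_gt_of_ne hne with h | h
    · refine hle {v | c v < t} (fun u v huv hv => lt_of_le_of_lt huv hv) fun p hpt hp => ?_
      rcases Γ.mem_carrier_cases hp with ⟨u, rfl⟩ | ⟨e', τ', hτ', rfl⟩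
      · rw [hF.vert] at hpt
        obtain rfl := hc (hpt.trans hvt.symm)
        refine ⟨e, G.mem_edgeBoundary_of_ends hw (Or.inr ⟨h, ?_⟩), τ, hτ, hτv⟩
        exact not_lt.2 hpt.ge
      · exact ⟨e', (hinterior e' τ' hτ' hpt).1, τ', Ioo_subset_Icc_self hτ', rfl⟩
    · refine hle {v | c v ≤ t} (fun u v huv hv => le_trans huv hv) fun p hpt hp => ?_
      rcases Γ.mem_carrier_cases hp with ⟨u, rfl⟩ | ⟨e', τ', hτ', rfl⟩
      · rw [hF.vert] at hpt
        obtain rfl := hc (hpt.trans hvt.symm)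
        refine ⟨e, G.mem_edgeBoundary_of_ends hw (Or.inl ⟨hpt.le, ?_⟩), τ, hτ, hτv⟩
        exact not_le.2 h
      · exact ⟨e', (hinterior e' τ' hτ' hpt).2, τ', Ioo_subset_Icc_self hτ', rfl⟩
  · push Not at hvert
    refine hle {v | c v < t} (fun u v huv hv => lt_of_le_of_lt huv hv) fun p hpt hp => ?_
    rcases Γ.mem_carrier_cases hp with ⟨u, rfl⟩ | ⟨e', τ', hτ', rfl⟩
    · rw [hF.vert] at hpt
      exact absurd hpt (hvert u)
    · exact ⟨e', (hinterior e' τ' hτ' hpt).1, τ', Ioo_subset_Icc_self hτ', rfl⟩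

end SmoothEmbedding

theorem morseWidth_eq_width {V E : Type*} [Fintype V] [Fintype E] (G : Multigraph V E)
    (Γ : SmoothEmbedding G) (hdeg : ∀ v, G.degree v ≤ 4) (hloop : G.Loopless)
    (hedge : Nonempty V → Nonempty E) :
    Γ.morseWidth = (G.width : ℕ∞) := by
  refine le_antisymm (Γ.morseWidth_le_width hdeg hloop hedge) ?_
  refine le_iInf₂ fun f hf => ?_
  exact Γ.width_le_widthWith hf.morse.smooth.continuous hf.vert_injective
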